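/- arXiv:1910.12098 — 2 statements merged into one kernel-verified Lean document; each statement's English description precedes it below -/
import Mathlib

section
/- Fix a real number r ≥ 1 and ν > −1. For s > 0 and ζ in the arc A, define Ψ(ζ) := s^ρ · ζ · ∫₀¹ logΓ((1+ν)/2 − i s^ρ t ζ) dt (the integral along the straight segment from 0 to ζ), and set J(s) := i(c₁+c₂) · (2πi)^{−1} ∫_A Ψ(ζ)·(1 − i(Im b₂)/ζ)·(1/r(ζ)) dζ (absolutely convergent). Then J admits the standard divergent expansion with error O(s^{−ρ} ln s) and constant term κ = ((c₁+c₂)/2)·[ (1−3ν²)/24 + ζ′(−1) − logG((ν+1)/2) + ((ν−1)/2)·ln Γ((ν+1)/2) ]·(1 − (Im b₂)/|b₂|) + ((c₁+c₂)/48)·(1−3ν²)·[ (1 + (Im b₂)/|b₂|)·ln((|b₂|+Im b₂)/2) − 2·((Im b₂)/|b₂|)·ln|b₂| ]. -/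
open Complex Filter MeasureTheory

noncomputable section

/-- Principal branch of log-Gamma on `ℂ ∖ (-∞,0]`. -/
def logGammaP (z : ℂ) : ℂ :=
  -(Real.eulerMascheroniConstant : ℂ) * z - Complex.log z +
    ∑' k : ℕ, (z / ((k : ℂ) + 1) - Complex.log (1 + z / ((k : ℂ) + 1)))

/-- Real logarithm of the Barnes `G`-function at `1 + x`, for `x > -1`. -/
def logBarnesG1p (x : ℝ) : ℝ :=
  x / 2 * Real.log (2 * Real.pi) - (x + x ^ 2 * (1 + Real.eulerMascheroniConstant)) / 2 +
    ∑' k : ℕ, (((k : ℝ) + 1) * Real.log (1 + x / ((k : ℝ) + 1)) - x + x ^ 2 / (2 * ((k : ℝ) + 1)))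

/-- `ρ = 1/(1+r)`. -/
def rhoOf (r : ℝ) : ℝ := 1 / (1 + r)

/-- `φ ∈ [0, π/2)` with `sin φ = (r-1)/(r+1)`. -/
def phiOf (r : ℝ) : ℝ := Real.arcsin ((r - 1) / (r + 1))

/-- `|b₂|`, determined by `Re b₂ = 2 r^{(1-r)/(2(1+r))}` and `arg b₂ = φ`. -/
def b2abs (r : ℝ) : ℝ := 2 * r ^ ((1 - r) / (2 * (1 + r))) / Real.cos (phiOf r)

/-- The point `b₂ = |b₂| e^{iφ}`. -/
def b2Of (r : ℝ) : ℂ := (b2abs r : ℂ) * Complex.exp ((phiOf r : ℝ) * Complex.I)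

/-- The point `b₁ = -conj(b₂)`. -/
def b1Of (r : ℝ) : ℂ := -(starRingEnd ℂ) (b2Of r)

/-- Integral along the circular arc `{R e^{iθ} : φ ≤ θ ≤ π - φ}`, oriented counterclockwise. -/
def arcIntegral (R φ : ℝ) (f : ℂ → ℂ) : ℂ :=
  ∫ θ in φ..(Real.pi - φ),
    f ((R : ℂ) * Complex.exp ((θ : ℝ) * Complex.I)) *
      (Complex.I * (R : ℂ) * Complex.exp ((θ : ℝ) * Complex.I))

/-- The branch `r(ζ) = ζ √(1 - 2i (Im b₂)/ζ - |b₂|²/ζ²)` (principal square root). -/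
def rBranch (r : ℝ) (ζ : ℂ) : ℂ :=
  ζ * (1 - 2 * Complex.I * ((b2Of r).im : ℂ) / ζ - ((b2abs r : ℂ)) ^ 2 / ζ ^ 2) ^ ((1 : ℂ) / 2)

/-- `f` admits the standard divergent expansion with constant term `κ` and
error `O(s^{-ρ} ln s)` as `s → +∞`. -/
def HasStdExpansion (ρ : ℝ) (f : ℝ → ℂ) (κ : ℂ) : Prop :=
  ∃ d₁ d₂ d₃ d₄ d₅ d₆ d₇ : ℂ,
    (fun s : ℝ =>
        f s - (d₁ * (s ^ (2 * ρ) : ℝ) * (Real.log s : ℝ) + d₂ * (s ^ (2 * ρ) : ℝ) +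
          d₃ * (s ^ ρ : ℝ) * ((Real.log s : ℝ)) ^ 2 + d₄ * (s ^ ρ : ℝ) * (Real.log s : ℝ) +
          d₅ * (s ^ ρ : ℝ) + d₆ * ((Real.log s : ℝ)) ^ 2 + d₇ * (Real.log s : ℝ) + κ))
      =O[atTop] fun s : ℝ => s ^ (-ρ) * Real.log s

/-- `Ψ(ζ) = s^ρ ζ ∫₀¹ logΓ((1+ν)/2 - i s^ρ t ζ) dt`. -/
def PsiOf (r ν s : ℝ) (ζ : ℂ) : ℂ :=
  ((s ^ rhoOf r : ℝ) : ℂ) * ζ *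
    ∫ t in (0 : ℝ)..1, logGammaP ((((1 + ν) / 2 : ℝ) : ℂ) - Complex.I * (s ^ rhoOf r : ℝ) * (t : ℝ) * ζ)

/-- `J(s) = i(c₁+c₂) (2πi)^{-1} ∫_A Ψ(ζ)(1 - i Im b₂/ζ)(1/r(ζ)) dζ` with `c₁+c₂ = 1+r`. -/
def Jfun (r ν : ℝ) (s : ℝ) : ℂ :=
  Complex.I * ((1 : ℂ) + (r : ℝ)) * (2 * Real.pi * Complex.I)⁻¹ *
    arcIntegral (b2abs r) (phiOf r)
      (fun ζ => PsiOf r ν s ζ * (1 - Complex.I * ((b2Of r).im : ℂ) / ζ) * (rBranch r ζ)⁻¹)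


/-! ## Part 1 -/
lemma hasDerivAt_ofReal' (x : ℝ) : HasDerivAt (fun y : ℝ => (y:ℂ)) 1 x := by
  simpa using (hasDerivAt_id x).ofReal_comp

/-- Euler-Maclaurin estimate -/
lemma em_bound (q p0 p1 p2 p3 : ℝ → ℂ) (K : ℝ)
    (hq : ∀ x ∈ Set.Icc (0:ℝ) 1, HasDerivAt q (p0 x) x)
    (h0 : ∀ x ∈ Set.Icc (0:ℝ) 1, HasDerivAt p0 (p1 x) x)
    (h1 : ∀ x ∈ Set.Icc (0:ℝ) 1, HasDerivAt p1 (p2 x) x)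
    (h2 : ∀ x ∈ Set.Icc (0:ℝ) 1, HasDerivAt p2 (p3 x) x)
    (hK : ∀ x ∈ Set.Icc (0:ℝ) 1, ‖p3 x‖ ≤ K) :
    ‖(1/2 : ℂ) * (p0 0 + p0 1) - (q 1 - q 0) - (1/12 : ℂ) * (p1 1 - p1 0)‖ ≤ K := by
  have key := norm_image_sub_le_of_norm_deriv_le_segment_01'
    (f := fun x : ℝ => (((x:ℂ)^3 - 3/2 * (x:ℂ)^2 + 1/2 * (x:ℂ))/6) * p2 x
      - (((x:ℂ)^2 - (x:ℂ) + 1/6)/2) * p1 x + ((x:ℂ) - 1/2) * p0 x - q x)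
    (f' := fun x : ℝ => (((x:ℂ)^3 - 3/2 * (x:ℂ)^2 + 1/2 * (x:ℂ))/6) * p3 x) (C := K) ?_ ?_
  · refine le_trans (le_of_eq ?_) key
    congr 1
    simp only [Complex.ofReal_one, Complex.ofReal_zero]
    ring
  · intro x hx
    have hx' := hasDerivAt_ofReal' x
    have hA := ((((hx'.pow 3).sub ((hx'.pow 2).const_mul (3/2))).add (hx'.const_mul (1/2))).div_const 6).mul (h2 x hx)
    have hB := ((((hx'.pow 2).sub hx').add_const (1/6)).div_const 2).mul (h1 x hx)
    have hC := (hx'.sub_const (1/2)).mul (h0 x hx)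
    refine HasDerivAt.hasDerivWithinAt ?_
    refine (((hA.sub hB).add hC).sub (hq x hx)).congr_deriv ?_
    simp
    ring
  · intro x hx
    have hx1 : x ∈ Set.Icc (0:ℝ) 1 := ⟨hx.1, hx.2.le⟩
    rw [norm_mul]
    have : ‖((x:ℂ)^3 - 3/2 * (x:ℂ)^2 + 1/2 * (x:ℂ))/6‖ ≤ 1 := by
      have e : ((x:ℂ)^3 - 3/2 * (x:ℂ)^2 + 1/2 * (x:ℂ))/6 = (((x^3 - 3/2*x^2+1/2*x)/6 : ℝ) : ℂ) := by
        push_cast; ring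
      rw [e, Complex.norm_real, Real.norm_eq_abs, abs_le]
      obtain ⟨a, b⟩ := hx1
      have h2 : 0 ≤ x^2 := by positivity
      have h3 : x^2 ≤ 1 := by nlinarith
      have h4 : 0 ≤ x^3 := by positivity
      have h5 : x^3 ≤ 1 := by nlinarith
      constructor <;> linarith
    calc _ ≤ 1 * ‖p3 x‖ := by gcongr
      _ ≤ K := by rw [one_mul]; exact hK x hx1

lemma norm_one_add_mul_ge {x : ℂ} (hx : 0 ≤ x.re) {t : ℝ} (ht : 0 ≤ t) : 1 ≤ ‖1 + (t:ℂ) * x‖ := by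
  calc (1:ℝ) ≤ (1 + (t:ℂ) * x).re := by simp; positivity
    _ ≤ _ := Complex.re_le_norm _

lemma mem_slit {x : ℂ} (hx : 0 ≤ x.re) {t : ℝ} (ht : 0 ≤ t) : 1 + (t:ℂ) * x ∈ slitPlane := by
  left
  simp
  positivity

lemma hasDerivAt_log_line {x : ℂ} (hx : 0 ≤ x.re) {t : ℝ} (ht : 0 ≤ t) :
    HasDerivAt (fun t : ℝ => Complex.log (1 + (t:ℂ) * x)) (x / (1 + (t:ℂ) * x)) t := by
  have hx' := hasDerivAt_ofReal' t
  have := ((hx'.mul_const x).const_add 1).clog_real (mem_slit hx ht)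
  simpa using this

lemma log_bound1 {x : ℂ} (hx : 0 ≤ x.re) : ‖Complex.log (1 + x) - x‖ ≤ ‖x‖^2 := by
  have key := norm_image_sub_le_of_norm_deriv_le_segment_01'
    (f := fun t : ℝ => Complex.log (1 + (t:ℂ) * x) - (t:ℂ) * x)
    (f' := fun t : ℝ => x / (1 + (t:ℂ) * x) - x) (C := ‖x‖^2) ?_ ?_
  · simpa using key
  · intro t ht
    have hx' := hasDerivAt_ofReal' t
    refine (((hasDerivAt_log_line hx ht.1).sub (hx'.mul_const x)).congr_deriv ?_).hasDerivWithinAt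
    ring
  · intro t ht
    have h1 := norm_one_add_mul_ge hx ht.1
    have h0 : 1 + (t:ℂ) * x ≠ 0 := slitPlane_ne_zero (mem_slit hx ht.1)
    have : x / (1 + (t:ℂ) * x) - x = - (t * x^2) / (1 + (t:ℂ) * x) := by
      rw [eq_div_iff h0, sub_mul, div_mul_cancel₀ _ h0]; ring
    rw [this, norm_div, norm_neg, norm_mul, norm_pow, Complex.norm_real, Real.norm_eq_abs, abs_of_nonneg ht.1]
    rw [div_le_iff₀ (by linarith)]
    have h2 : t ≤ 1 := ht.2.le
    have h3 : 0 ≤ ‖x‖^2 := by positivity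
    nlinarith

lemma log_bound2 {x : ℂ} (hx : 0 ≤ x.re) : ‖Complex.log (1 + x) - x + x^2/2‖ ≤ ‖x‖^3 := by
  have key := norm_image_sub_le_of_norm_deriv_le_segment_01'
    (f := fun t : ℝ => Complex.log (1 + (t:ℂ) * x) - (t:ℂ) * x + ((t:ℂ)^2) * (x^2/2))
    (f' := fun t : ℝ => x / (1 + (t:ℂ) * x) - x + t * x^2) (C := ‖x‖^3) ?_ ?_
  · simpa using key
  · intro t ht
    have hx' := hasDerivAt_ofReal' t
    refine ((((hasDerivAt_log_line hx ht.1).sub (hx'.mul_const x)).add ((hx'.pow 2).mul_const (x^2/2))).congr_deriv ?_).hasDerivWithinAt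
    simp
    ring
  · intro t ht
    have h1 := norm_one_add_mul_ge hx ht.1
    have h0 : 1 + (t:ℂ) * x ≠ 0 := slitPlane_ne_zero (mem_slit hx ht.1)
    have : x / (1 + (t:ℂ) * x) - x + t * x^2 = (t^2 * x^3) / (1 + (t:ℂ) * x) := by
      rw [eq_div_iff h0, add_mul, sub_mul, div_mul_cancel₀ _ h0]; ring
    rw [this, norm_div, norm_mul, norm_pow, norm_pow, Complex.norm_real, Real.norm_eq_abs, abs_of_nonneg ht.1]
    rw [div_le_iff₀ (by linarith)]
    have h2 : t^2 ≤ 1 := by nlinarith [ht.1, ht.2]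
    have h3 : 0 ≤ ‖x‖^3 := by positivity
    nlinarith

/-! ## Part 2 -/
lemma hasDerivAt_cpow_real (c : ℂ) {x : ℝ} (hx : 0 < x) :
    HasDerivAt (fun y : ℝ => (y:ℂ)^c) (c * (x:ℂ)^(c-1)) x := by
  have := (hasDerivAt_ofReal' x)
  have h2 : HasDerivAt (fun z : ℂ => z^c) (c * (x:ℂ)^(c-1)) (x:ℂ) := by
    simpa using (hasDerivAt_id (x:ℂ)).cpow_const (c := c) (Or.inl (by simpa using hx))
  exact h2.comp_ofReal

lemma hasDerivAt_cpow_shift (c : ℂ) {m x : ℝ} (hx : 0 < m + x) :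
    HasDerivAt (fun y : ℝ => ((m + y : ℝ):ℂ)^c) (c * ((m + x : ℝ):ℂ)^(c-1)) x := by
  have h := (hasDerivAt_cpow_real c hx).scomp x ((hasDerivAt_id x).const_add m)
  exact h.congr_deriv (by simp)

noncomputable def fz (s : ℂ) (x : ℝ) : ℂ :=
  (x:ℂ)^(1-s)/(s-1) + (x:ℂ)^(-s)/2 + s * (x:ℂ)^(-s-1)/12

noncomputable def uz (n : ℕ) (s : ℂ) : ℂ :=
  (((n:ℝ)+1 : ℝ):ℂ)^(-s) - fz s ((n:ℝ)+1) + fz s ((n:ℝ)+1+1)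

def Uz : Set ℂ := {s | -3/2 < s.re} ∩ ({s | s.re - s.im < 0} ∩ Metric.ball 0 10)

lemma Uz_open : IsOpen Uz := by
  refine IsOpen.inter ?_ (IsOpen.inter ?_ Metric.isOpen_ball)
  · exact isOpen_lt continuous_const Complex.continuous_re
  · exact isOpen_lt (Complex.continuous_re.sub Complex.continuous_im) continuous_const

lemma Uz_convex : Convex ℝ Uz := by
  refine Convex.inter ?_ (Convex.inter ?_ (convex_ball _ _))
  · exact convex_halfSpace_re_gt _
  · have : IsLinearMap ℝ (fun s : ℂ => s.re - s.im) := by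
      constructor <;> intros <;> simp <;> ring
    exact convex_halfSpace_lt this 0

lemma Uz_ne_one {s : ℂ} (hs : s ∈ Uz) : s - 1 ≠ 0 := by
  intro h
  have : s = 1 := by linear_combination h
  subst this
  have := hs.2.1
  norm_num at this

lemma uz_bound (n : ℕ) {s : ℂ} (hs : s ∈ Uz) :
    ‖uz n s‖ ≤ 1320 * (((n:ℝ)+1)^(-(3/2) : ℝ)) := by
  have hs1 := Uz_ne_one hs
  have hs1' : 1 - s ≠ 0 := by intro h; apply hs1; linear_combination -h
  have hn : (0:ℝ) < (n:ℝ) + 1 := by positivity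
  have key := em_bound (fun x => (((n:ℝ)+1 + x : ℝ):ℂ)^(1-s)/(1-s)) (fun x => (((n:ℝ)+1 + x : ℝ):ℂ)^(-s))
    (fun x => (-s) * (((n:ℝ)+1 + x : ℝ):ℂ)^(-s-1))
    (fun x => (-s) * ((-s-1) * (((n:ℝ)+1 + x : ℝ):ℂ)^(-s-1-1)))
    (fun x => (-s) * ((-s-1) * ((-s-1-1) * (((n:ℝ)+1 + x : ℝ):ℂ)^(-s-1-1-1))))
    (1320 * (((n:ℝ)+1)^(-(3/2) : ℝ))) ?_ ?_ ?_ ?_ ?_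
  · refine le_trans (le_of_eq ?_) key
    congr 1
    simp only [uz, fz, add_zero]
    field_simp
    ring
  · intro x hx
    have := (hasDerivAt_cpow_shift (1-s) (m := (n:ℝ)+1) (x := x) (by linarith [hx.1])).div_const (1-s)
    refine this.congr_deriv ?_
    rw [mul_div_cancel_left₀ _ hs1']
    congr 1; ring
  · intro x hx
    exact hasDerivAt_cpow_shift (-s) (m := (n:ℝ)+1) (x := x) (by linarith [hx.1])
  · intro x hx
    exact (hasDerivAt_cpow_shift (-s-1) (m := (n:ℝ)+1) (x := x) (by linarith [hx.1])).const_mul _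
  · intro x hx
    exact ((hasDerivAt_cpow_shift (-s-1-1) (m := (n:ℝ)+1) (x := x) (by linarith [hx.1])).const_mul _).const_mul _
  · intro x hx
    have hpos : 0 < (n:ℝ)+1+x := by linarith [hx.1]
    have hb : ‖s‖ ≤ 10 := by
      have := hs.2.2
      simp at this; exact this.le
    have h3 : ‖-s-1‖ ≤ 11 := by
      calc _ ≤ ‖-s‖ + ‖(1:ℂ)‖ := norm_sub_le _ _
        _ ≤ 11 := by simp; linarith
    have h4 : ‖-s-1-1‖ ≤ 12 := by
      calc _ ≤ ‖-s-1‖ + ‖(1:ℂ)‖ := norm_sub_le _ _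
        _ ≤ 12 := by simp; linarith
    have h5 : ‖(((n:ℝ)+1 + x : ℝ):ℂ)^(-s-1-1-1)‖ ≤ ((n:ℝ)+1)^(-(3/2) : ℝ) := by
      rw [Complex.norm_cpow_eq_rpow_re_of_pos hpos]
      have hre : (-s-1-1-1).re ≤ -(3/2) := by
        have := hs.1
        simp at this ⊢; linarith
      calc _ ≤ ((n:ℝ)+1 + x)^(-(3/2) : ℝ) := by
            apply Real.rpow_le_rpow_of_exponent_le _ hre
            have : (0:ℝ) ≤ n := by positivity
            linarith [hx.1]
        _ ≤ _ := by
            apply Real.rpow_le_rpow_of_nonpos hn (by linarith [hx.1]) (by norm_num)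
    rw [norm_mul, norm_mul, norm_mul, norm_neg]
    have h6 : (0:ℝ) ≤ ((n:ℝ)+1)^(-(3/2) : ℝ) := by positivity
    calc _ ≤ 10 * (11 * (12 * (((n:ℝ)+1)^(-(3/2) : ℝ)))) := by gcongr
      _ = _ := by ring

lemma fz_diff (x : ℝ) (hx : 0 < x) : DifferentiableOn ℂ (fun s => fz s x) Uz := by
  intro s hs
  have hx0 : (x:ℂ) ≠ 0 := by exact_mod_cast hx.ne'
  have hs1 := Uz_ne_one hs
  apply DifferentiableAt.differentiableWithinAt
  unfold fz
  have e : ∀ c : ℂ → ℂ, DifferentiableAt ℂ c s → DifferentiableAt ℂ (fun s => (x:ℂ)^(c s)) s :=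
    fun c hc => hc.const_cpow (Or.inl hx0)
  have h1 := e (fun s => 1 - s) (by fun_prop)
  have h2 := e (fun s => - s) (by fun_prop)
  have h3 := e (fun s => - s - 1) (by fun_prop)
  exact ((h1.div (by fun_prop) hs1).add (h2.div_const 2)).add
    (((differentiableAt_id).mul h3).div_const 12)

noncomputable def FN (N : ℕ) (s : ℂ) : ℂ :=
  ∑ n ∈ Finset.range N, (((n:ℝ)+1 : ℝ):ℂ)^(-s) + fz s ((N:ℝ)+1)

lemma FN_eq (N : ℕ) (s : ℂ) : FN N s = fz s 1 + ∑ n ∈ Finset.range N, uz n s := by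
  induction N with
  | zero => simp [FN]
  | succ N ih =>
    rw [Finset.sum_range_succ, ← add_assoc, ← ih]
    simp only [FN, Finset.sum_range_succ, uz]
    push_cast
    ring

lemma FN_diff (N : ℕ) : DifferentiableOn ℂ (FN N) Uz := by
  unfold FN
  refine DifferentiableOn.add ?_ (fz_diff _ (by positivity))
  refine DifferentiableOn.fun_sum ?_
  intro n hn s hs
  have hx0 : (((n:ℝ)+1 : ℝ):ℂ) ≠ 0 := by exact_mod_cast (by positivity : (n:ℝ)+1 ≠ 0)
  apply DifferentiableAt.differentiableWithinAt
  exact DifferentiableAt.const_cpow (by fun_prop) (Or.inl hx0)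

noncomputable def Gz (s : ℂ) : ℂ := fz s 1 + ∑' n, uz n s

lemma uz_summable_bound : Summable (fun n : ℕ => 1320 * (((n:ℝ)+1)^(-(3/2) : ℝ))) := by
  apply Summable.mul_left
  have := (Real.summable_nat_rpow (p := -(3/2))).2 (by norm_num)
  have := (summable_nat_add_iff 1).2 this
  simpa using this

lemma FN_tendsto : TendstoLocallyUniformlyOn FN Gz atTop Uz := by
  apply TendstoUniformlyOn.tendstoLocallyUniformlyOn
  have h := tendstoUniformlyOn_tsum_nat uz_summable_bound (f := uz) (s := Uz)
    (fun n x hx => uz_bound n hx)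
  rw [Metric.tendstoUniformlyOn_iff] at h ⊢
  intro ε hε
  filter_upwards [h ε hε] with N hN x hx
  rw [FN_eq, Gz, dist_add_left]
  exact hN x hx

lemma Gz_diff : DifferentiableOn ℂ Gz Uz :=
  FN_tendsto.differentiableOn (Eventually.of_forall FN_diff) Uz_open

lemma FN_tendsto_zeta {s : ℂ} (hs : 1 < s.re) : Tendsto (fun N => FN N s) atTop (nhds (riemannZeta s)) := by
  have h1 : Tendsto (fun N : ℕ => ∑ n ∈ Finset.range N, (((n:ℝ)+1 : ℝ):ℂ)^(-s)) atTop (nhds (riemannZeta s)) := by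
    rw [zeta_eq_tsum_one_div_nat_add_one_cpow hs]
    have hsum : Summable (fun n : ℕ => 1 / ((n:ℂ)+1)^s) := by
      have := (summable_nat_add_iff 1).2 (Complex.summable_one_div_nat_cpow.2 hs)
      simpa using this
    convert hsum.hasSum.tendsto_sum_nat using 3 with N n
    rw [cpow_neg]; push_cast; simp
  have hc : ∀ c : ℂ, c.re < 0 → Tendsto (fun N : ℕ => (((N:ℝ)+1 : ℝ):ℂ)^c) atTop (nhds 0) := by
    intro c hc
    rw [tendsto_zero_iff_norm_tendsto_zero]
    have : ∀ N : ℕ, ‖(((N:ℝ)+1 : ℝ):ℂ)^c‖ = ((N:ℝ)+1)^(-(-c.re)) := by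
      intro N
      rw [Complex.norm_cpow_eq_rpow_re_of_pos (by positivity), neg_neg]
    simp_rw [this]
    have h := tendsto_rpow_neg_atTop (y := -c.re) (by linarith)
    exact h.comp (tendsto_atTop_add_const_right _ _ tendsto_natCast_atTop_atTop)
  have h2 : Tendsto (fun N : ℕ => fz s ((N:ℝ)+1)) atTop (nhds 0) := by
    have a := (hc (1-s) (by simp; linarith)).div_const (s-1)
    have b := (hc (-s) (by simp; linarith)).div_const 2
    have c := ((hc (-s-1) (by simp; linarith)).const_mul s).div_const 12
    simpa [fz] using (a.add b).add c
  simpa [FN] using h1.add h2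

lemma Gz_eq : Set.EqOn Gz riemannZeta Uz := by
  have hz : DifferentiableOn ℂ riemannZeta Uz := by
    intro s hs
    apply DifferentiableAt.differentiableWithinAt
    apply differentiableAt_riemannZeta
    intro h; exact Uz_ne_one hs (by rw [h]; ring)
  have h0 : (2 + 3 * I : ℂ) ∈ Uz := by
    refine ⟨by simp; norm_num, by simp; norm_num, ?_⟩
    simp only [Metric.mem_ball, dist_zero_right]
    calc ‖(2 + 3 * I : ℂ)‖ ≤ ‖(2:ℂ)‖ + ‖3 * I‖ := norm_add_le _ _
      _ < 10 := by simp; norm_num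
  refine AnalyticOnNhd.eqOn_of_preconnected_of_eventuallyEq (Gz_diff.analyticOnNhd Uz_open)
    (hz.analyticOnNhd Uz_open) Uz_convex.isPreconnected h0 ?_
  have ho : IsOpen ({s : ℂ | 1 < s.re} ∩ Uz) :=
    (isOpen_lt continuous_const Complex.continuous_re).inter Uz_open
  filter_upwards [ho.mem_nhds ⟨by simp, h0⟩] with s hs
  exact tendsto_nhds_unique (FN_tendsto.tendsto_at hs.2) (FN_tendsto_zeta hs.1)

lemma neg_one_mem : (-1 : ℂ) ∈ Uz := by
  refine ⟨by simp; norm_num, by simp, ?_⟩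
  simp

lemma deriv_FN_tendsto : Tendsto (fun N => deriv (FN N) (-1)) atTop (nhds (deriv riemannZeta (-1))) := by
  have h := (FN_tendsto.deriv (Eventually.of_forall FN_diff) Uz_open).tendsto_at neg_one_mem
  have e : deriv Gz (-1) = deriv riemannZeta (-1) := by
    apply Filter.EventuallyEq.deriv_eq
    filter_upwards [Uz_open.mem_nhds neg_one_mem] with s hs using Gz_eq hs
  rw [e] at h
  exact h

lemma hasDerivAt_const_cpow (x : ℝ) (hx : 0 < x) (c : ℂ → ℂ) (c' s : ℂ) (hc : HasDerivAt c c' s) :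
    HasDerivAt (fun s => (x:ℂ)^(c s)) ((x:ℂ)^(c s) * (Real.log x : ℂ) * c') s := by
  have hx0 : (x:ℂ) ≠ 0 := by exact_mod_cast hx.ne'
  rw [Complex.ofReal_log hx.le]
  exact hc.const_cpow (Or.inl hx0)

lemma deriv_FN (N : ℕ) : deriv (FN N) (-1) = ((
    - ∑ n ∈ Finset.range N, ((n:ℝ)+1) * Real.log ((n:ℝ)+1) + (((N:ℝ)+1)^2/2 - ((N:ℝ)+1)/2 + 1/12) * Real.log ((N:ℝ)+1)
      - ((N:ℝ)+1)^2/4 + 1/12 : ℝ) : ℂ) := by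
  apply HasDerivAt.deriv
  have hx : 0 < (N:ℝ)+1 := by positivity
  have hx0 : (((N:ℝ)+1:ℝ):ℂ) ≠ 0 := by exact_mod_cast hx.ne'
  have hid := hasDerivAt_id (-1 : ℂ)
  have h1 := hasDerivAt_const_cpow _ hx (fun s => 1 - s) (-1) (-1) (by simpa using hid.const_sub 1)
  have h2 := hasDerivAt_const_cpow _ hx (fun s => - s) (-1) (-1) hid.neg
  have h3 := hasDerivAt_const_cpow _ hx (fun s => - s - 1) (-1) (-1) (hid.neg.sub_const 1)
  have hs : HasDerivAt (fun s : ℂ => ∑ n ∈ Finset.range N, (((n:ℝ)+1 : ℝ):ℂ)^(-s))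
      (∑ n ∈ Finset.range N, (((n:ℝ)+1 : ℝ):ℂ)^(-(-1:ℂ)) * (Real.log ((n:ℝ)+1) : ℂ) * (-1)) (-1) := by
    refine HasDerivAt.fun_sum ?_
    intro n hn
    exact hasDerivAt_const_cpow _ (by positivity) (fun s => - s) (-1) (-1) hid.neg
  have h := hs.add (((h1.div (hid.sub_const 1) (by norm_num)).add (h2.div_const 2)).add ((hid.mul h3).div_const 12))
  refine HasDerivAt.congr_deriv (f := FN N) h ?_
  have e1 : (((N:ℝ)+1:ℝ):ℂ) ^ (1 - (-1:ℂ)) = (((N:ℝ)+1:ℝ):ℂ)^2 := by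
    rw [← Complex.cpow_ofNat]; congr 1; norm_num
  have e2 : (((N:ℝ)+1:ℝ):ℂ) ^ (-(-1:ℂ)) = (((N:ℝ)+1:ℝ):ℂ) := by simp
  have e3 : (((N:ℝ)+1:ℝ):ℂ) ^ (-(-1:ℂ) - 1) = 1 := by simp
  have e4 : ∑ n ∈ Finset.range N, (((n:ℝ)+1 : ℝ):ℂ)^(-(-1:ℂ)) * (Real.log ((n:ℝ)+1) : ℂ) * (-1)
     = ((- ∑ n ∈ Finset.range N, ((n:ℝ)+1) * Real.log ((n:ℝ)+1) : ℝ):ℂ) := by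
    rw [Complex.ofReal_neg, Complex.ofReal_sum, ← Finset.sum_neg_distrib]
    apply Finset.sum_congr rfl
    intro n _
    simp
  rw [e1, e2, e3, e4]
  simp only [id]
  push_cast
  ring

/-- Glaisher-type limit. -/
lemma glaisher : Tendsto (fun N : ℕ => (((∑ n ∈ Finset.range N, ((n:ℝ)+1) * Real.log ((n:ℝ)+1)
      - (((N:ℝ)+1)^2/2 - ((N:ℝ)+1)/2 + 1/12) * Real.log ((N:ℝ)+1) + ((N:ℝ)+1)^2/4 : ℝ)) : ℂ)) atTop
      (nhds (1/12 - deriv riemannZeta (-1))) := by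
  have h := (deriv_FN_tendsto).const_sub (1/12)
  refine h.congr ?_
  intro N
  rw [deriv_FN]
  push_cast
  ring

/-! ## Part 3 -/

def pk (k : ℕ) (z : ℂ) : ℂ :=
  z^2 / (2 * ((k:ℂ)+1)) - ((z + ((k:ℂ)+1)) * Complex.log (1 + z / ((k:ℂ)+1)) - z)

def Pf (z : ℂ) : ℂ :=
  -(Real.eulerMascheroniConstant : ℂ) * z^2 / 2 - (z * Complex.log z - z) + ∑' k : ℕ, pk k z

lemma natc_ne (k : ℕ) : (k:ℂ) + 1 ≠ 0 := Nat.cast_add_one_ne_zero k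

lemma re_div_nat {z : ℂ} (k : ℕ) : (z / ((k:ℂ)+1)).re = z.re / ((k:ℝ)+1) := by
  have : ((k:ℂ)+1) = (((k:ℝ)+1 : ℝ) : ℂ) := by push_cast; rfl
  rw [this, Complex.div_ofReal_re]

lemma norm_div_nat {z : ℂ} (k : ℕ) : ‖z / ((k:ℂ)+1)‖ = ‖z‖ / ((k:ℝ)+1) := by
  have : ((k:ℂ)+1) = (((k:ℝ)+1 : ℝ) : ℂ) := by push_cast; rfl
  rw [norm_div, this, Complex.norm_real, Real.norm_eq_abs, abs_of_pos (by positivity)]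

lemma summable_inv_sq : Summable (fun k : ℕ => 1 / ((k:ℝ)+1)^2) := by
  have := (summable_nat_add_iff 1).2 (Real.summable_one_div_nat_pow (p := 2).2 (by norm_num))
  simpa using this

lemma pk_bound (k : ℕ) {z : ℂ} (hz : 0 < z.re) :
    ‖pk k z‖ ≤ (‖z‖^3/2 + (1+‖z‖) * ‖z‖^3) * (1 / ((k:ℝ)+1)^2) := by
  have hk := natc_ne k
  have hx : 0 ≤ (z / ((k:ℂ)+1)).re := by rw [re_div_nat]; positivity
  have hb := log_bound2 hx
  have hn := norm_div_nat (z := z) k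
  set x := z / ((k:ℂ)+1) with hxd
  have hzx : z = x * ((k:ℂ)+1) := by rw [hxd]; field_simp
  have e : pk k z = ((k:ℂ)+1) * (x^3/2 - (1+x) * (Complex.log (1+x) - x + x^2/2)) := by
    unfold pk
    rw [← hxd]
    have : z^2 / (2 * ((k:ℂ)+1)) = x^2 * ((k:ℂ)+1) / 2 := by rw [hzx]; field_simp
    rw [this, hzx]
    ring
  have hk1 : (1:ℝ) ≤ (k:ℝ)+1 := by have : (0:ℝ) ≤ k := by positivity
                                   linarith
  have hkn : ‖(k:ℂ)+1‖ = (k:ℝ)+1 := by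
    have : ((k:ℂ)+1) = (((k:ℝ)+1 : ℝ) : ℂ) := by push_cast; rfl
    rw [this, Complex.norm_real, Real.norm_eq_abs, abs_of_pos (by positivity)]
  have hx1 : ‖1 + x‖ ≤ 1 + ‖z‖ := by
    calc _ ≤ ‖(1:ℂ)‖ + ‖x‖ := norm_add_le _ _
      _ ≤ _ := by
        rw [hn, norm_one]
        gcongr
        exact div_le_self (norm_nonneg _) hk1
  rw [e, norm_mul, hkn]
  calc ((k:ℝ)+1) * ‖x^3/2 - (1+x) * (Complex.log (1+x) - x + x^2/2)‖
      ≤ ((k:ℝ)+1) * (‖x‖^3/2 + (1+‖z‖) * ‖x‖^3) := by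
        gcongr
        refine (norm_sub_le _ _).trans ?_
        rw [norm_mul, norm_div, norm_pow]
        simp only [Complex.norm_ofNat]
        gcongr
    _ = _ := by
        rw [hn]
        field_simp

lemma pk_summable {z : ℂ} (hz : 0 < z.re) : Summable (fun k => pk k z) :=
  Summable.of_norm_bounded (summable_inv_sq.mul_left _) (fun k => pk_bound k hz)

lemma one_add_slit {x : ℂ} (hx : 0 ≤ x.re) : 1 + x ∈ slitPlane := by
  left; simp; linarith

lemma pk_deriv (k : ℕ) {z : ℂ} (hz : 0 < z.re) :
    HasDerivAt (pk k) (z / ((k : ℂ) + 1) - Complex.log (1 + z / ((k : ℂ) + 1))) z := by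
  have hk := natc_ne k
  have hx : 0 ≤ (z / ((k:ℂ)+1)).re := by rw [re_div_nat]; positivity
  have hs := one_add_slit hx
  have hs0 := slitPlane_ne_zero hs
  have hid := hasDerivAt_id z
  have h1 := (hid.pow 2).div_const (2 * ((k:ℂ)+1))
  have h2 := (((hid.div_const ((k:ℂ)+1)).const_add 1).clog hs)
  have h3 := (hid.add_const ((k:ℂ)+1)).mul h2
  refine HasDerivAt.congr_deriv (f := pk k) (h1.sub (h3.sub hid)) ?_
  simp only [id]
  have e : (z + ((k:ℂ)+1)) * (1 / ((k:ℂ)+1) / (1 + z / ((k:ℂ)+1))) = 1 := by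
    have : z + ((k:ℂ)+1) = ((k:ℂ)+1) * (1 + z / ((k:ℂ)+1)) := by field_simp; ring
    rw [this]
    have aux : ∀ c y : ℂ, c ≠ 0 → y ≠ 0 → c * y * (1 / c / y) = 1 := by
      intro c y hc hy
      field_simp
    exact aux _ _ hk hs0
  rw [e]
  field_simp
  simp
  ring

lemma Pf_deriv {z : ℂ} (hz : 0 < z.re) : HasDerivAt Pf (logGammaP z) z := by
  set B := ‖z‖ + 1
  set t : Set ℂ := {w | 0 < w.re} ∩ Metric.ball 0 B
  have ht : IsOpen t := (isOpen_lt continuous_const Complex.continuous_re).inter Metric.isOpen_ball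
  have htc : IsPreconnected t := ((convex_halfSpace_re_gt 0).inter (convex_ball _ _)).isPreconnected
  have hzt : z ∈ t := ⟨hz, by simp [B]⟩
  have h := hasDerivAt_tsum_of_isPreconnected (g := pk) (g' := fun k z => z / ((k : ℂ) + 1) - Complex.log (1 + z / ((k : ℂ) + 1)))
    (summable_inv_sq.mul_left (B^2)) ht htc (fun n y hy => pk_deriv n hy.1) ?_ hzt (pk_summable hz) hzt
  · have hid := hasDerivAt_id z
    have hs : z ∈ slitPlane := Or.inl hz
    have hz0 := slitPlane_ne_zero hs
    have h2 := (((hid.pow 2).const_mul (-(Real.eulerMascheroniConstant : ℂ))).div_const 2).sub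
      ((hid.mul (hid.clog hs)).sub hid)
    refine HasDerivAt.congr_deriv (f := Pf) (h2.add h) ?_
    unfold logGammaP
    simp only [id]
    field_simp
    simp
    ring
  · intro n y hy
    have hx : 0 ≤ (y / ((n:ℂ)+1)).re := by rw [re_div_nat]; have := hy.1; simp at this; positivity
    rw [norm_sub_rev]
    refine (log_bound1 hx).trans ?_
    rw [norm_div_nat]
    have : ‖y‖ ≤ B := by have := hy.2; simp at this; exact this.le
    calc _ = ‖y‖^2 * (1 / ((n:ℝ)+1)^2) := by field_simp
      _ ≤ _ := by gcongr

def T0 (z : ℂ) : ℂ := (z^2/2 - z/2 + 1/12) * Complex.log z - 3*z^2/4 + z/2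

def tt (z : ℂ) : ℂ := T0 (z+1) - T0 z - (z * Complex.log z - z)

lemma tt_bound {z : ℂ} (hz : 0 < z.re) : ‖tt z‖ ≤ 1 / ‖z‖^2 := by
  have hsl : ∀ x ∈ Set.Icc (0:ℝ) 1, z + x ∈ slitPlane := fun x hx => by
    left; simp; linarith [hx.1]
  have hid : ∀ x : ℝ, HasDerivAt (fun x : ℝ => z + (x:ℂ)) 1 x := fun x =>
    (hasDerivAt_ofReal' x).const_add z
  have hlog : ∀ x ∈ Set.Icc (0:ℝ) 1, HasDerivAt (fun x : ℝ => Complex.log (z + x)) (1/(z+x)) x :=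
    fun x hx => (hid x).clog_real (hsl x hx)
  have key := em_bound (fun x => (z+x)^2/2 * Complex.log (z+x) - 3*(z+x)^2/4)
    (fun x => (z+x) * Complex.log (z+x) - (z+x)) (fun x => Complex.log (z+x))
    (fun x => 1/(z+x)) (fun x => -1/(z+x)^2) (1/‖z‖^2) ?_ ?_ hlog ?_ ?_
  · rw [← norm_neg]
    refine le_trans (le_of_eq ?_) key
    congr 1
    simp only [tt, T0, Complex.ofReal_one, Complex.ofReal_zero, add_zero]
    ring
  · intro x hx
    have h0 := slitPlane_ne_zero (hsl x hx)
    refine HasDerivAt.congr_deriv (((((hid x).pow 2).div_const 2).mul (hlog x hx)).sub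
      ((((hid x).pow 2).const_mul 3).div_const 4)) ?_
    simp
    field_simp
    ring
  · intro x hx
    have h0 := slitPlane_ne_zero (hsl x hx)
    refine HasDerivAt.congr_deriv (((hid x).mul (hlog x hx)).sub (hid x)) ?_
    field_simp
    ring
  · intro x hx
    have h0 := slitPlane_ne_zero (hsl x hx)
    refine HasDerivAt.congr_deriv (HasDerivAt.div (hasDerivAt_const x (1:ℂ)) (hid x) h0) ?_
    simp
  · intro x hx
    have h0 : z ≠ 0 := slitPlane_ne_zero (Or.inl hz)
    rw [norm_div, norm_neg, norm_one, norm_pow]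
    have : ‖z‖ ≤ ‖z + x‖ := by
      rw [Complex.norm_def, Complex.norm_def]
      apply Real.sqrt_le_sqrt
      rw [Complex.normSq_apply, Complex.normSq_apply]
      simp
      nlinarith [hx.1]
    have hz' : 0 < ‖z‖ := norm_pos_iff.2 h0
    gcongr

lemma norm_add_nat_sq {z : ℂ} (hz : 0 < z.re) (k : ℕ) : ‖z‖^2 + (k:ℝ)^2 ≤ ‖z + k‖^2 := by
  rw [← Complex.normSq_eq_norm_sq, ← Complex.normSq_eq_norm_sq, Complex.normSq_apply, Complex.normSq_apply]
  simp
  have : (0:ℝ) ≤ k := by positivity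
  nlinarith [mul_nonneg this hz.le]

lemma tt_bound2 {z : ℂ} (hz : 0 < z.re) (k : ℕ) : ‖tt (z + k)‖ ≤ 1 / (‖z‖^2 + (k:ℝ)^2) := by
  have h0 : z ≠ 0 := slitPlane_ne_zero (Or.inl hz)
  have hz' : 0 < ‖z‖ := norm_pos_iff.2 h0
  have hk : 0 < (z + k).re := by simp; positivity
  refine (tt_bound hk).trans ?_
  apply one_div_le_one_div_of_le (by positivity) (norm_add_nat_sq hz k)

def Af (z : ℂ) : ℂ := ∑' k : ℕ, tt (z + k)

lemma tt_summable {z : ℂ} (hz : 0 < z.re) : Summable (fun k : ℕ => tt (z + k)) := by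
  have h0 : z ≠ 0 := slitPlane_ne_zero (Or.inl hz)
  have hz' : 0 < ‖z‖ := norm_pos_iff.2 h0
  rw [← summable_nat_add_iff 1]
  refine Summable.of_norm_bounded summable_inv_sq (fun k => (tt_bound2 hz (k+1)).trans ?_)
  push_cast
  apply one_div_le_one_div_of_le (by positivity)
  nlinarith [sq_nonneg ‖z‖]

lemma telescope_sum (X : ℝ) (hX : 1 < X) : HasSum (fun k : ℕ => 1/(X-1+k) - 1/(X+k)) (1/(X-1)) := by
  have hnn : ∀ k : ℕ, 0 ≤ 1/(X-1+k) - 1/(X+k) := by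
    intro k
    have : (0:ℝ) ≤ k := by positivity
    rw [sub_nonneg]
    apply one_div_le_one_div_of_le <;> linarith
  rw [hasSum_iff_tendsto_nat_of_nonneg hnn]
  have : ∀ N : ℕ, ∑ k ∈ Finset.range N, (1/(X-1+k) - 1/(X+k)) = 1/(X-1) - 1/(X-1+N) := by
    intro N
    induction N with
    | zero => simp
    | succ N ih => rw [Finset.sum_range_succ, ih]; push_cast; ring
  simp_rw [this]
  have h : Tendsto (fun N : ℕ => 1/(X-1+(N:ℝ))) atTop (nhds 0) := by
    have := (tendsto_atTop_add_const_left atTop (X-1) (tendsto_natCast_atTop_atTop (R := ℝ))).inv_tendsto_atTop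
    simp only [one_div]
    exact this
  simpa using h.const_sub (1/(X-1))

lemma Af_bound {z : ℂ} (hz : 0 < z.re) (h2 : 2 ≤ ‖z‖) : ‖Af z‖ ≤ 4 / ‖z‖ := by
  have hs := (telescope_sum ‖z‖ (by linarith)).mul_left 2
  refine (tsum_of_norm_bounded hs ?_).trans ?_
  · intro k
    refine (tt_bound2 hz k).trans ?_
    have hk : (0:ℝ) ≤ k := by positivity
    have e : 1/(‖z‖-1+k) - 1/(‖z‖+k) = 1 / ((‖z‖-1+k) * (‖z‖+k)) := by
      have h3 : ‖z‖ - 1 + k ≠ 0 := by linarith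
      have h4 : ‖z‖ + k ≠ 0 := by linarith
      field_simp
      ring
    rw [e, mul_one_div, div_le_div_iff₀ (by positivity) (by apply mul_pos <;> linarith)]
    nlinarith [sq_nonneg (‖z‖ - k)]
  · rw [mul_one_div, div_le_div_iff₀ (by linarith) (by linarith)]
    linarith

/-! ## Part 4 -/
def expC (a : ℂ) : ℝ := ‖a - 1/2‖ * ‖a‖^2/2 + ‖a^2/2 - a/2 + 1/12‖ * ‖a‖ + ‖a^2/2 - a/2 + 1/12‖ * ‖a‖^2/2
  + (1/2 + ‖a - 1/2‖ + ‖a^2/2 - a/2 + 1/12‖) * ‖a‖^3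

lemma poly_log_exp (a w : ℂ) (hw : 1 ≤ ‖w‖) (h : 0 ≤ (a/w).re) :
    ‖((a+w)^2/2 - (a+w)/2 + 1/12) * Complex.log (1 + a/w) - (a*w/2 + 3*a^2/4 - a/2)‖ ≤ expC a / ‖w‖ := by
  have hw0 : w ≠ 0 := by
    intro h0; rw [h0] at hw; norm_num at hw
  have hb := log_bound2 h
  set e := Complex.log (1 + a/w) - a/w + (a/w)^2/2 with he
  have hl : Complex.log (1 + a/w) = a/w - (a/w)^2/2 + e := by rw [he]; ring
  set β := a - 1/2 with hβ
  set δ := a^2/2 - a/2 + 1/12 with hδ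
  have hwp : 0 < ‖w‖ := by linarith
  have heq : ((a+w)^2/2 - (a+w)/2 + 1/12) * Complex.log (1 + a/w) - (a*w/2 + 3*a^2/4 - a/2)
      = (-β * a^2/2)/w + (δ * a)/w + (-(δ * a^2/2))/w^2 + (w^2/2 + β*w + δ) * e := by
    rw [hl]
    have : ((a+w)^2/2 - (a+w)/2 + 1/12) = w^2/2 + β*w + δ := by rw [hβ, hδ]; ring
    rw [this, add_comm (a/w - (a/w)^2/2) e, mul_add, ← sub_eq_zero]
    have : (w^2/2 + β*w + δ) * (a/w - (a/w)^2/2) = a*w/2 - a^2/4 + β*a + (-β * a^2/2)/w + (δ * a)/w + (-(δ * a^2/2))/w^2 := by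
      field_simp
      ring
    rw [this, hβ]
    ring
  rw [heq]
  have h1 : ‖(-β * a^2/2)/w‖ = (‖β‖ * ‖a‖^2/2) / ‖w‖ := by simp
  have h2 : ‖(δ * a)/w‖ = (‖δ‖ * ‖a‖)/‖w‖ := by simp
  have h3 : ‖(-(δ * a^2/2))/w^2‖ ≤ (‖δ‖ * ‖a‖^2/2)/‖w‖ := by
    rw [norm_div, norm_neg, norm_pow]
    have : ‖δ * a^2/2‖ = ‖δ‖ * ‖a‖^2/2 := by simp
    rw [this]
    gcongr
    nlinarith
  have h4 : ‖(w^2/2 + β*w + δ) * e‖ ≤ ((1/2 + ‖β‖ + ‖δ‖) * ‖a‖^3) / ‖w‖ := by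
    rw [norm_mul]
    have : ‖w^2/2 + β*w + δ‖ ≤ (1/2 + ‖β‖ + ‖δ‖) * ‖w‖^2 := by
      refine (norm_add₃_le).trans ?_
      have : ‖w‖ ≤ ‖w‖^2 := by nlinarith
      have h1 : (1:ℝ) ≤ ‖w‖^2 := by nlinarith
      have a1 : ‖w^2/2‖ = 1/2 * ‖w‖^2 := by simp; ring
      have a2 : ‖β*w‖ ≤ ‖β‖ * ‖w‖^2 := by
        rw [norm_mul]; gcongr
      have a3 : ‖δ‖ ≤ ‖δ‖ * ‖w‖^2 := by nlinarith [norm_nonneg δ]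
      rw [a1]
      nlinarith
    calc _ ≤ ((1/2 + ‖β‖ + ‖δ‖) * ‖w‖^2) * ‖a/w‖^3 := by gcongr
      _ = _ := by rw [norm_div]; field_simp
  calc _ ≤ ‖(-β * a^2/2)/w‖ + ‖(δ * a)/w‖ + ‖(-(δ * a^2/2))/w^2‖ + ‖(w^2/2 + β*w + δ) * e‖ := norm_add₄_le
    _ ≤ (‖β‖ * ‖a‖^2/2) / ‖w‖ + (‖δ‖ * ‖a‖)/‖w‖ + (‖δ‖ * ‖a‖^2/2)/‖w‖ + ((1/2 + ‖β‖ + ‖δ‖) * ‖a‖^3) / ‖w‖ := by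
      rw [h1, h2]; gcongr
    _ = _ := by unfold expC; ring

lemma log_add_nat {z : ℂ} (hz : 0 < z.re) (k : ℕ) :
    Complex.log (z + ((k:ℂ)+1)) = (Real.log ((k:ℝ)+1) : ℂ) + Complex.log (1 + z/((k:ℂ)+1)) := by
  have hk := natc_ne k
  have hx : 0 ≤ (z / ((k:ℂ)+1)).re := by rw [re_div_nat]; positivity
  have hs0 := slitPlane_ne_zero (one_add_slit hx)
  rw [← Complex.log_ofReal_mul (by positivity) hs0]
  congr 1
  push_cast
  field_simp
  ring

lemma finite_id {z : ℂ} (hz : 0 < z.re) (N : ℕ) :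
    -(z * Complex.log z - z) + ∑ k ∈ Finset.range N, pk k z
    = T0 z + ∑ k ∈ Finset.range (N+1), tt (z + k) - T0 (z + ((N:ℂ)+1))
      + z^2/2 * ((∑ k ∈ Finset.range N, 1/((k:ℝ)+1) : ℝ) : ℂ)
      + z * ((∑ k ∈ Finset.range N, Real.log ((k:ℝ)+1) : ℝ) : ℂ)
      + ((∑ k ∈ Finset.range N, ((k:ℝ)+1) * Real.log ((k:ℝ)+1) : ℝ) : ℂ) - (N:ℂ) * (N+1)/2 := by
  induction N with
  | zero =>
    simp [tt]
    ring
  | succ N ih =>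
    rw [Finset.sum_range_succ, ← add_assoc, ih, Finset.sum_range_succ _ (N+1),
      Finset.sum_range_succ (fun k : ℕ => 1/((k:ℝ)+1)), Finset.sum_range_succ (fun k : ℕ => Real.log ((k:ℝ)+1)),
      Finset.sum_range_succ (fun k : ℕ => ((k:ℝ)+1) * Real.log ((k:ℝ)+1))]
    have hl := log_add_nat hz N
    have hk := natc_ne N
    have hp : pk N z = z^2/(2*((N:ℂ)+1)) - ((z + ((N:ℂ)+1)) * (Complex.log (z + ((N:ℂ)+1)) - (Real.log ((N:ℝ)+1) : ℂ)) - z) := by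
      rw [pk, hl]; ring
    have ht : tt (z + ((N+1:ℕ):ℂ)) = T0 (z + (((N+1:ℕ):ℂ)+1)) - T0 (z + ((N:ℂ)+1)) -
        ((z + ((N:ℂ)+1)) * Complex.log (z + ((N:ℂ)+1)) - (z + ((N:ℂ)+1))) := by
      unfold tt
      push_cast
      ring_nf
    rw [hp, ht]
    push_cast
    field_simp
    ring

lemma harm_limit : Tendsto (fun N : ℕ => ∑ k ∈ Finset.range N, 1/((k:ℝ)+1) - Real.log ((N:ℝ)+1)) atTop
    (nhds Real.eulerMascheroniConstant) := by
  refine Real.tendsto_harmonic_sub_log_add_one.congr ?_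
  intro N
  simp [harmonic]

lemma harm_limit' : Tendsto (fun N : ℕ => ∑ k ∈ Finset.range N, 1/((k:ℝ)+1) - Real.log (N:ℝ)) atTop
    (nhds Real.eulerMascheroniConstant) := by
  refine Real.tendsto_harmonic_sub_log.congr ?_
  intro N
  simp [harmonic]

lemma sum_log_fact (N : ℕ) : ∑ k ∈ Finset.range N, Real.log ((k:ℝ)+1) = Real.log (N.factorial) := by
  induction N with
  | zero => simp
  | succ N ih =>
    rw [Finset.sum_range_succ, ih, Nat.factorial_succ]
    push_cast
    rw [Real.log_mul (by positivity) (by positivity)]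
    ring

lemma stirling' : Tendsto (fun N : ℕ => ∑ k ∈ Finset.range N, Real.log ((k:ℝ)+1) + N - (N + 1/2) * Real.log N) atTop
    (nhds (Real.log (2*Real.pi)/2)) := by
  have h := (Real.continuousAt_log (x := √Real.pi) (by positivity)).tendsto.comp Stirling.tendsto_stirlingSeq_sqrt_pi
  have h2 := h.add_const (Real.log 2/2)
  have e : Real.log (√Real.pi) + Real.log 2 / 2 = Real.log (2*Real.pi)/2 := by
    rw [Real.log_sqrt (by positivity), Real.log_mul (by norm_num) (by positivity)]; ring
  rw [e] at h2
  refine h2.congr' ?_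
  filter_upwards [eventually_ge_atTop 1] with N hN
  have hN' : (0:ℝ) < N := by exact_mod_cast hN
  simp only [Function.comp]
  rw [Stirling.log_stirlingSeq_formula, sum_log_fact, Real.log_mul (by norm_num) hN'.ne',
    Real.log_div hN'.ne' (by positivity), Real.log_exp]
  ring

lemma stirling1 : Tendsto (fun N : ℕ => ∑ k ∈ Finset.range N, Real.log ((k:ℝ)+1) - (N+1) * Real.log ((N:ℝ)+1) +
    Real.log ((N:ℝ)+1)/2 + (N+1)) atTop (nhds (Real.log (2*Real.pi)/2)) := by
  have h := (tendsto_add_atTop_iff_nat 1).2 stirling'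
  refine h.congr ?_
  intro N
  rw [Finset.sum_range_succ]
  push_cast
  ring

/-- Full Stirling-type formula for `Pf`. -/
lemma Pf_formula {z : ℂ} (hz : 0 < z.re) :
    Pf z = T0 z + (Real.log (2*Real.pi)/2 : ℝ) * z + (1/12 - deriv riemannZeta (-1)) + Af z := by
  set γ : ℝ := Real.eulerMascheroniConstant with hγ
  have hL : Tendsto (fun N : ℕ => -(γ:ℂ) * z^2/2 + (-(z * Complex.log z - z) + ∑ k ∈ Finset.range N, pk k z)) atTop
      (nhds (Pf z)) := by
    have := ((pk_summable hz).hasSum.tendsto_sum_nat).const_add (-(γ:ℂ) * z^2/2 - (z * Complex.log z - z))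
    refine (this.congr ?_)
    intro N
    ring
  refine tendsto_nhds_unique hL ?_
  have hA : Tendsto (fun N : ℕ => ∑ k ∈ Finset.range (N+1), tt (z + k)) atTop (nhds (Af z)) :=
    (tendsto_add_atTop_iff_nat 1).2 (tt_summable hz).hasSum.tendsto_sum_nat
  have hH := ((Complex.continuous_ofReal.tendsto _).comp harm_limit)
  have hS := ((Complex.continuous_ofReal.tendsto _).comp stirling1)
  have hG := glaisher
  have hE : Tendsto (fun N : ℕ => ((z+((N:ℂ)+1))^2/2 - (z+((N:ℂ)+1))/2 + 1/12) * Complex.log (1 + z/((N:ℂ)+1)) - (z*((N:ℂ)+1)/2 + 3*z^2/4 - z/2))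
      atTop (nhds 0) := by
    have h0 : Tendsto (fun N : ℕ => expC z / ((N:ℝ)+1)) atTop (nhds 0) := by
      have := tendsto_one_div_add_atTop_nhds_zero_nat (𝕜 := ℝ)
      simpa [div_eq_mul_inv] using this.const_mul (expC z)
    refine squeeze_zero_norm ?_ h0
    intro N
    have hn : ‖(N:ℂ)+1‖ = (N:ℝ)+1 := by
      have : ((N:ℂ)+1) = (((N:ℝ)+1 : ℝ) : ℂ) := by push_cast; rfl
      rw [this, Complex.norm_real, Real.norm_eq_abs, abs_of_pos (by positivity)]
    rw [← hn]
    apply poly_log_exp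
    · rw [hn]; have : (0:ℝ) ≤ N := by positivity
      linarith
    · rw [re_div_nat]; positivity
  have hT := ((((hA.const_add (T0 z)).add ((hH.sub_const (γ:ℂ)).const_mul (z^2/2))).add (hS.const_mul z)).add hG).sub hE
  refine Tendsto.congr ?_ (hT.trans (le_of_eq ?_))
  · intro N
    rw [finite_id hz N]
    have hT0 : T0 (z + ((N:ℂ)+1)) = ((z+((N:ℂ)+1))^2/2 - (z+((N:ℂ)+1))/2 + 1/12) *
       ((Real.log ((N:ℝ)+1) : ℂ) + Complex.log (1 + z/((N:ℂ)+1))) - 3*(z+((N:ℂ)+1))^2/4 + (z+((N:ℂ)+1))/2 := by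
      rw [T0, log_add_nat hz N]
    rw [hT0]
    simp only [Function.comp]
    push_cast
    ring
  · congr 1
    rw [hγ]
    ring

/-! ## Part 5 -/

def bk (x : ℝ) (k : ℕ) : ℝ := ((k : ℝ) + 1) * Real.log (1 + x / ((k : ℝ) + 1)) - x + x ^ 2 / (2 * ((k : ℝ) + 1))

lemma bk_summable (x : ℝ) : Summable (bk x) := by
  refine Summable.of_norm_bounded_eventually_nat (g := fun k : ℕ => (2 * |x|^3) * (1 / ((k:ℝ)+1)^2))
    (summable_inv_sq.mul_left _) ?_
  have hev : ∀ᶠ k : ℕ in atTop, 2 * |x| ≤ (k:ℝ) := (tendsto_natCast_atTop_atTop).eventually_ge_atTop _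
  filter_upwards [hev] with k hk
  have hk1 : (0:ℝ) < (k:ℝ) + 1 := by positivity
  set y := x / ((k:ℝ)+1) with hy
  have hya : |y| = |x| / ((k:ℝ)+1) := by rw [hy, abs_div, abs_of_pos hk1]
  have hyb : |y| ≤ 1/2 := by
    rw [hya, div_le_iff₀ hk1]; linarith
  have h := Real.abs_log_sub_add_sum_range_le (x := -y) (by rw [abs_neg]; linarith) 2
  rw [abs_neg] at h
  simp only [Finset.sum_range_succ, Finset.sum_range_zero] at h
  have e : bk x k = ((k:ℝ)+1) * (0 + (-y)^(0+1)/((0:ℕ)+1) + (-y)^(1+1)/((1:ℕ)+1) + Real.log (1 - -y)) := by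
    have hxy : x = y * ((k:ℝ)+1) := by rw [hy]; field_simp
    have e2 : x^2 / (2 * ((k:ℝ)+1)) = y^2 * ((k:ℝ)+1)/2 := by rw [hxy]; field_simp
    unfold bk
    rw [e2, ← hy, sub_neg_eq_add]
    nth_rewrite 1 [hxy]
    norm_num
    ring
  rw [e, Real.norm_eq_abs, abs_mul, abs_of_pos hk1]
  calc _ ≤ ((k:ℝ)+1) * (|y|^(2+1) / (1 - |y|)) := by gcongr
    _ ≤ ((k:ℝ)+1) * (|y|^3 / (1/2)) := by
      gcongr
      linarith
    _ = _ := by rw [hya]; field_simp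

lemma real_finite_id {a : ℝ} (ha : 0 < a) (N : ℕ) :
    -a * Real.log a + a + ∑ k ∈ Finset.range N, (a^2/(2*((k:ℝ)+1)) - ((a + ((k:ℝ)+1)) * Real.log (1 + a/((k:ℝ)+1)) - a))
     + ∑ k ∈ Finset.range N, bk (a-1) k + (a-1) * ∑ m ∈ Finset.range (N+1), Real.log (a+m)
    = (a^2 - a + 1/2) * ∑ k ∈ Finset.range N, 1/((k:ℝ)+1) + N + a
      + a * ∑ k ∈ Finset.range N, Real.log ((k:ℝ)+1) - (N+1) * Real.log (a + N) := by
  induction N with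
  | zero => simp; ring
  | succ N ih =>
    have hN : (0:ℝ) < (N:ℝ)+1 := by positivity
    have hN2 : (0:ℝ) ≤ N := by positivity
    have l1 : Real.log (1 + a/((N:ℝ)+1)) = Real.log (a + ((N:ℝ)+1)) - Real.log ((N:ℝ)+1) := by
      rw [← Real.log_div (by positivity) (by positivity)]; congr 1; field_simp; ring
    have l2 : Real.log (1 + (a-1)/((N:ℝ)+1)) = Real.log (a + N) - Real.log ((N:ℝ)+1) := by
      rw [← Real.log_div (by positivity) (by positivity)]; congr 1; field_simp; ring
    rw [Finset.sum_range_succ _ N, Finset.sum_range_succ (bk (a-1)) N, Finset.sum_range_succ _ (N+1),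
      Finset.sum_range_succ (fun k : ℕ => 1/((k:ℝ)+1)), Finset.sum_range_succ (fun k : ℕ => Real.log ((k:ℝ)+1))]
    rw [l1]
    unfold bk at ih ⊢
    rw [l2]
    push_cast
    field_simp
    field_simp at ih
    linear_combination ((N:ℝ)+1) * ih

lemma Pf_real {a : ℝ} (ha : 0 < a) :
    Pf (a:ℂ) = ((a/2 * Real.log (2*Real.pi) - a*(a-1)/2 - logBarnesG1p (a-1)
      + (a-1) * Real.log (Real.Gamma a) : ℝ) : ℂ) := by
  have hare : 0 < (a:ℂ).re := by simpa using ha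
  set γ : ℝ := Real.eulerMascheroniConstant with hγ
  have hpk : ∀ k : ℕ, pk k (a:ℂ) = ((a^2/(2*((k:ℝ)+1)) - ((a + ((k:ℝ)+1)) * Real.log (1 + a/((k:ℝ)+1)) - a) : ℝ) : ℂ) := by
    intro k
    unfold pk
    have : (1 + (a:ℂ)/((k:ℂ)+1)) = ((1 + a/((k:ℝ)+1) : ℝ) : ℂ) := by push_cast; rfl
    rw [this, ← Complex.ofReal_log (by positivity)]
    push_cast; rfl
  have hsum : Summable (fun k : ℕ => (a^2/(2*((k:ℝ)+1)) - ((a + ((k:ℝ)+1)) * Real.log (1 + a/((k:ℝ)+1)) - a) : ℝ)) := by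
    have := pk_summable hare
    simp_rw [hpk] at this
    exact Complex.summable_ofReal.1 this
  set Ps : ℝ := -γ*a^2/2 - (a * Real.log a - a) + ∑' k : ℕ, (a^2/(2*((k:ℝ)+1)) - ((a + ((k:ℝ)+1)) * Real.log (1 + a/((k:ℝ)+1)) - a)) with hPs
  have hPf : Pf (a:ℂ) = (Ps : ℂ) := by
    unfold Pf
    simp_rw [hpk]
    rw [← Complex.ofReal_tsum, ← Complex.ofReal_log ha.le, hPs]
    push_cast
    ring
  rw [hPf, Complex.ofReal_inj]
  have t1 := hsum.hasSum.tendsto_sum_nat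
  have t2 := (bk_summable (a-1)).hasSum.tendsto_sum_nat
  have t3 := (Real.BohrMollerup.tendsto_log_gamma ha).const_mul (a-1)
  have hL := ((t1.add t2).sub t3).add_const (-γ*a^2/2 - (a * Real.log a - a) +
     ((a-1) / 2 * Real.log (2 * Real.pi) - ((a-1) + (a-1) ^ 2 * (1 + γ)) / 2))
  have s1 := (harm_limit'.sub_const γ).const_mul (a^2-a+1/2)
  have s2 := stirling'
  have s3 := (Real.tendsto_mul_log_one_add_div_atTop a).comp (tendsto_natCast_atTop_atTop (R := ℝ))
  have s4 : Tendsto (fun N : ℕ => Real.log (1 + a / (N:ℝ))) atTop (nhds 0) := by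
    have h := (tendsto_const_div_atTop_nhds_zero_nat a).const_add 1
    have h2 := (Real.continuousAt_log (x := 1 + 0) (by norm_num)).tendsto.comp h
    simpa [Function.comp_def] using h2
  have hR := ((s1.add s2).sub (s3.add s4)).add_const (a + (a-1)/2 * Real.log (2*Real.pi) - (a-1)/2 - (a-1)^2/2)
  have hU := tendsto_nhds_unique_of_eventuallyEq hL hR ?_
  · have hb : ∑' k, bk (a-1) k = logBarnesG1p (a-1) - ((a-1) / 2 * Real.log (2 * Real.pi) - ((a-1) + (a-1) ^ 2 * (1 + γ)) / 2) := by
      unfold logBarnesG1p bk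
      ring
    rw [hb] at hU
    rw [hPs]
    linear_combination hU
  · filter_upwards [eventually_ge_atTop 1] with N hN
    have hN' : (0:ℝ) < N := by exact_mod_cast hN
    have h := real_finite_id ha N
    have l : Real.log (1 + a/(N:ℝ)) = Real.log (a + N) - Real.log N := by
      rw [← Real.log_div (by positivity) (by positivity)]; congr 1; field_simp; ring
    simp only [Function.comp, Real.BohrMollerup.logGammaSeq, ← sum_log_fact, l]
    linear_combination h

lemma F_int {a : ℝ} (ha : 0 < a) {w : ℂ} (hw : 0 ≤ w.re) :
    w * ∫ t in (0:ℝ)..1, logGammaP ((a:ℂ) + t * w) = Pf (a + w) - Pf a := by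
  have hre : ∀ t ∈ Set.uIcc (0:ℝ) 1, 0 < ((a:ℂ) + t * w).re := by
    intro t ht
    rw [Set.uIcc_of_le zero_le_one] at ht
    have := mul_nonneg ht.1 hw
    simp; linarith
  have hU : IsOpen {z : ℂ | 0 < z.re} := isOpen_lt continuous_const Complex.continuous_re
  have hcont : ContinuousOn logGammaP {z : ℂ | 0 < z.re} := by
    have hd : DifferentiableOn ℂ Pf {z : ℂ | 0 < z.re} := fun z hz => (Pf_deriv hz).differentiableAt.differentiableWithinAt
    have := (hd.deriv hU).continuousOn
    exact this.congr (fun z hz => (Pf_deriv hz).deriv.symm)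
  have hc : ContinuousOn (fun t : ℝ => logGammaP ((a:ℂ) + t * w)) (Set.uIcc 0 1) := by
    refine hcont.comp (by fun_prop) (fun t ht => hre t ht)
  rw [← intervalIntegral.integral_const_mul]
  have := intervalIntegral.integral_eq_sub_of_hasDerivAt (f := fun t : ℝ => Pf ((a:ℂ) + t * w))
    (f' := fun t : ℝ => w * logGammaP ((a:ℂ) + t * w)) (a := 0) (b := 1) ?_ ?_
  · rw [this]; simp
  · intro t ht
    have h1 : HasDerivAt (fun t : ℝ => (a:ℂ) + t * w) w t := by
      refine HasDerivAt.congr_deriv (((hasDerivAt_ofReal' t).mul_const w).const_add (a:ℂ)) (by simp)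
    have := (Pf_deriv (hre t ht)).comp_of_eq (𝕜 := ℝ) t h1 rfl
    refine HasDerivAt.congr_deriv this (by ring)
  · exact (hc.const_smul w).intervalIntegrable

def mainF (a : ℝ) (w : ℂ) : ℂ :=
  (w^2/2 + (a - 1/2) * w + (a^2/2 - a/2 + 1/12)) * Complex.log w - 3/4 * w^2
   + (1/2 - a + (Real.log (2*Real.pi)/2 : ℝ)) * w
   + ((Real.log (2*Real.pi)/2 : ℝ) * a + (1/12 - deriv riemannZeta (-1)) - Pf a)

lemma F_asym {a : ℝ} (ha : 0 < a) {w : ℂ} (hw : 0 ≤ w.re) (h2 : 2 ≤ ‖w‖) :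
    ‖Pf (a + w) - Pf a - mainF a w‖ ≤ (expC a + 4) / ‖w‖ := by
  have hw0 : w ≠ 0 := by intro h; rw [h] at h2; norm_num at h2
  have hre : 0 < ((a:ℂ) + w).re := by simp; linarith
  have hq : 0 ≤ ((a:ℂ)/w).re := by
    rw [Complex.div_re]
    have := Complex.normSq_nonneg w
    simp
    exact div_nonneg (mul_nonneg ha.le hw) this
  have hs := one_add_slit hq
  have hlog : Complex.log ((a:ℂ) + w) = Complex.log w + Complex.log (1 + a/w) := by
    rw [← (Complex.log_mul_eq_add_log_iff hw0 (slitPlane_ne_zero hs)).2]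
    · congr 1; field_simp; ring
    · have h1 := Complex.abs_arg_le_pi_div_two_iff.2 hw
      have h3 := (Complex.abs_arg_lt_pi_div_two_iff (z := 1 + a/w)).2 (Or.inl (by simp at hq ⊢; linarith))
      rw [abs_le] at h1
      rw [abs_lt] at h3
      constructor <;> linarith [h1.1, h1.2, h3.1, h3.2]
  have hnorm : ‖w‖ ≤ ‖(a:ℂ) + w‖ := by
    rw [Complex.norm_def, Complex.norm_def]
    apply Real.sqrt_le_sqrt
    rw [Complex.normSq_apply, Complex.normSq_apply]
    simp
    nlinarith
  have hA := Af_bound hre (h2.trans hnorm)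
  have hE := poly_log_exp a w (by linarith) hq
  have heq : Pf (a + w) - Pf a - mainF a w =
      (((a+w)^2/2 - (a+w)/2 + 1/12) * Complex.log (1 + a/w) - (a*w/2 + 3*a^2/4 - a/2)) + Af (a+w) := by
    rw [Pf_formula hre, T0, hlog, mainF]
    ring
  rw [heq]
  have h5 : (expC a + 4)/‖w‖ = expC a/‖w‖ + 4/‖w‖ := add_div _ _ _
  rw [h5]
  refine (norm_add_le _ _).trans (add_le_add hE (hA.trans ?_))
  gcongr

/-! ## Part 6 -/
def Hf (y : ℝ) : ℝ := Real.arcsin y / Real.sqrt (1 - y^2)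
def Hf' (y : ℝ) : ℝ := (1 + y * Hf y) / (1 - y^2)

lemma sqpos {y : ℝ} (hy : |y| < 1) : 0 < 1 - y^2 := by
  have := (sq_lt_one_iff_abs_lt_one y).2 hy
  linarith

lemma Hf_deriv {y : ℝ} (hy : |y| < 1) : HasDerivAt Hf (Hf' y) y := by
  have h0 := sqpos hy
  have hl := abs_lt.1 hy
  have h1 := Real.hasDerivAt_arcsin (x := y) (by linarith) (by linarith)
  have h2 : HasDerivAt (fun y : ℝ => 1 - y^2) (-(2*y)) y := by
    refine HasDerivAt.congr_deriv (((hasDerivAt_id y).pow 2).const_sub 1) (by simp)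
  have h3 := h2.sqrt h0.ne'
  have hs : 0 < Real.sqrt (1 - y^2) := Real.sqrt_pos.2 h0
  refine HasDerivAt.congr_deriv (f := Hf) (h1.div h3 hs.ne') ?_
  unfold Hf' Hf
  have hq : Real.sqrt (1 - y^2)^2 = 1 - y^2 := Real.sq_sqrt h0.le
  rw [hq]
  congr 1
  field_simp
  ring

lemma ksin {k : ℝ} (hk : |k| < 1) (x : ℝ) : |k * Real.sin x| < 1 := by
  rw [abs_mul]
  have := Real.abs_sin_le_one x
  nlinarith [abs_nonneg k, abs_nonneg (Real.sin x)]

lemma Hf_cont {k : ℝ} (hk : |k| < 1) : Continuous (fun x => Hf (k * Real.sin x)) := by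
  unfold Hf
  refine Continuous.div (by fun_prop) (by fun_prop) (fun x => ?_)
  exact (Real.sqrt_pos.2 (sqpos (ksin hk x))).ne'

lemma Hf'_cont {k : ℝ} (hk : |k| < 1) : Continuous (fun x => Hf' (k * Real.sin x)) := by
  unfold Hf'
  have := Hf_cont hk
  refine Continuous.div (by fun_prop) (by fun_prop) (fun x => ?_)
  exact ((sqpos (ksin hk x))).ne'

lemma Hf'_int {k : ℝ} (hk : |k| < 1) :
    (1 - k^2) * ∫ x in (-(Real.pi/2))..(Real.pi/2), Hf' (k * Real.sin x) = Real.pi := by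
  have hc := Hf_cont hk
  have hc' := Hf'_cont hk
  have h1 : ∫ x in (-(Real.pi/2))..(Real.pi/2),
      (-Real.sin x * (k * Hf (k * Real.sin x)) + Real.cos x * (k * (Hf' (k * Real.sin x) * (k * Real.cos x)))) = 0 := by
    rw [intervalIntegral.integral_eq_sub_of_hasDerivAt (f := fun x => Real.cos x * (k * Hf (k * Real.sin x)))]
    · simp
    · intro x _
      have h2 := ((Real.hasDerivAt_sin x).const_mul k)
      have h3 := (Hf_deriv (ksin hk x)).comp x h2
      exact (Real.hasDerivAt_cos x).mul (h3.const_mul k)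
    · exact (by fun_prop : Continuous _).intervalIntegrable _ _
  have h2 : ∫ x in (-(Real.pi/2))..(Real.pi/2), (1 - (1 - k^2) * Hf' (k * Real.sin x)) = 0 := by
    rw [← h1]
    apply intervalIntegral.integral_congr
    intro x _
    have h := sqpos (ksin hk x)
    have e : (1 - (k * Real.sin x)^2) * Hf' (k * Real.sin x) = 1 + (k * Real.sin x) * Hf (k * Real.sin x) := by
      unfold Hf'; exact mul_div_cancel₀ _ h.ne'
    have hcs := Real.sin_sq_add_cos_sq x
    simp only
    linear_combination (-1) * e - k^2 * Hf' (k * Real.sin x) * hcs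
  rw [intervalIntegral.integral_sub ((by fun_prop : Continuous _).intervalIntegrable _ _) ((by fun_prop : Continuous _).intervalIntegrable _ _), intervalIntegral.integral_const_mul] at h2
  simp at h2
  linarith

lemma Hf_contOn : ContinuousOn Hf (Set.Ioo (-1) 1) := fun y hy =>
  (Hf_deriv (abs_lt.2 hy)).continuousAt.continuousWithinAt

lemma Hf'_contOn : ContinuousOn Hf' (Set.Ioo (-1) 1) := by
  unfold Hf'
  have := Hf_contOn
  refine ContinuousOn.div (by fun_prop) (by fun_prop) (fun y hy => ?_)
  exact (sqpos (abs_lt.2 hy)).ne'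

lemma g_deriv {k : ℝ} (hk : |k| < 1) :
    HasDerivAt (fun k : ℝ => ∫ x in (-(Real.pi/2))..(Real.pi/2), (k * Real.sin x) * Hf (k * Real.sin x))
     (∫ x in (-(Real.pi/2))..(Real.pi/2), Real.sin x * (Hf (k * Real.sin x) + (k * Real.sin x) * Hf' (k * Real.sin x))) k := by
  set q := (1 + |k|)/2 with hq
  have hq1 : q < 1 := by linarith
  have hbd : ∃ M, ∀ y ∈ Set.Icc (-q) q, ‖Hf y + y * Hf' y‖ ≤ M := by
    apply IsCompact.exists_bound_of_continuousOn isCompact_Icc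
    have hs : Set.Icc (-q) q ⊆ Set.Ioo (-1) 1 := fun y hy => ⟨by linarith [hy.1], by linarith [hy.2]⟩
    have h1 := Hf_contOn.mono hs
    have h2 := Hf'_contOn.mono hs
    fun_prop
  obtain ⟨M, hM⟩ := hbd
  have hball : ∀ k' ∈ Metric.ball k (q - |k|), |k'| < q := by
    intro k' hk'
    rw [Metric.mem_ball, Real.dist_eq] at hk'
    have := abs_sub_abs_le_abs_sub k' k
    linarith
  have hlt : ∀ k' ∈ Metric.ball k (q - |k|), |k'| < 1 := fun k' h => (hball k' h).trans hq1
  refine (intervalIntegral.hasDerivAt_integral_of_dominated_loc_of_deriv_le (𝕜 := ℝ)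
    (F := fun k x => (k * Real.sin x) * Hf (k * Real.sin x))
    (F' := fun k x => Real.sin x * (Hf (k * Real.sin x) + (k * Real.sin x) * Hf' (k * Real.sin x)))
    (bound := fun _ => M) (Metric.ball_mem_nhds k (ε := q - |k|) (by linarith)) ?_ ?_ ?_ ?_ ?_ ?_).2
  · filter_upwards [Metric.ball_mem_nhds k (ε := q - |k|) (by linarith)] with k' hk'
    have := Hf_cont (hlt k' hk')
    exact (by fun_prop : Continuous _).aestronglyMeasurable
  · have := Hf_cont hk
    exact (by fun_prop : Continuous _).intervalIntegrable _ _
  · have := Hf_cont hk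
    have := Hf'_cont hk
    exact (by fun_prop : Continuous _).aestronglyMeasurable
  · refine Eventually.of_forall (fun x _ k' hk' => ?_)
    have h1 := hball k' hk'
    have h2 := Real.abs_sin_le_one x
    have h3 : |k' * Real.sin x| ≤ q := by
      rw [abs_mul]
      nlinarith [abs_nonneg k', abs_nonneg (Real.sin x)]
    have h4 := hM _ (abs_le.1 h3)
    rw [norm_mul]
    calc _ ≤ 1 * M := mul_le_mul h2 h4 (norm_nonneg _) zero_le_one
      _ = M := one_mul M
  · exact intervalIntegrable_const
  · refine Eventually.of_forall (fun x _ k' hk' => ?_)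
    have h2 : HasDerivAt (fun k => k * Real.sin x) (Real.sin x) k' := by
      simpa using (hasDerivAt_id k').mul_const (Real.sin x)
    have h3 := (Hf_deriv (ksin (hlt k' hk') x)).comp k' h2
    refine HasDerivAt.congr_deriv (h2.mul h3) ?_
    ring

lemma g_deriv' {k : ℝ} (hk : |k| < 1) :
    HasDerivAt (fun k : ℝ => ∫ x in (-(Real.pi/2))..(Real.pi/2), (k * Real.sin x) * Hf (k * Real.sin x))
     (Real.pi * k / (1 - k^2)) k := by
  refine HasDerivAt.congr_deriv (g_deriv hk) ?_
  have hk2 := sqpos hk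
  rcases eq_or_ne k 0 with rfl | h0
  · simp [Hf]
  have hc := Hf'_cont hk
  have h1 := Hf'_int hk
  have h2 : k * ∫ x in (-(Real.pi/2))..(Real.pi/2), Real.sin x * (Hf (k * Real.sin x) + (k * Real.sin x) * Hf' (k * Real.sin x))
     = ∫ x in (-(Real.pi/2))..(Real.pi/2), (Hf' (k * Real.sin x) - 1) := by
    rw [← intervalIntegral.integral_const_mul]
    apply intervalIntegral.integral_congr
    intro x _
    have h := sqpos (ksin hk x)
    have e : (1 - (k * Real.sin x)^2) * Hf' (k * Real.sin x) = 1 + (k * Real.sin x) * Hf (k * Real.sin x) := by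
      unfold Hf'; exact mul_div_cancel₀ _ h.ne'
    simp only
    linear_combination (-1) * e
  rw [intervalIntegral.integral_sub ((by fun_prop : Continuous _).intervalIntegrable _ _) ((by fun_prop : Continuous _).intervalIntegrable _ _)] at h2
  simp at h2
  rw [eq_div_iff hk2.ne']
  apply mul_left_cancel₀ h0
  linear_combination (1-k^2) * h2 + h1

lemma g_eq {k : ℝ} (hk0 : 0 ≤ k) (hk : k < 1) :
    ∫ x in (-(Real.pi/2))..(Real.pi/2), (k * Real.sin x) * Hf (k * Real.sin x) = - (Real.pi/2) * Real.log (1 - k^2) := by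
  set g := (fun k : ℝ => ∫ x in (-(Real.pi/2))..(Real.pi/2), (k * Real.sin x) * Hf (k * Real.sin x)) with hg
  have hab : ∀ y ∈ Set.Icc (0:ℝ) k, |y| < 1 := fun y hy => abs_lt.2 ⟨by linarith [hy.1], by linarith [hy.2]⟩
  have hd : ∀ y ∈ Set.Icc (0:ℝ) k, HasDerivAt (fun y => g y + (Real.pi/2) * Real.log (1 - y^2)) 0 y := by
    intro y hy
    have h0 := sqpos (hab y hy)
    have h2 : HasDerivAt (fun y : ℝ => 1 - y^2) (-(2*y)) y := by
      refine HasDerivAt.congr_deriv (((hasDerivAt_id y).pow 2).const_sub 1) (by simp)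
    refine HasDerivAt.congr_deriv ((g_deriv' (hab y hy)).add ((h2.log h0.ne').const_mul (Real.pi/2))) ?_
    field_simp
    ring
  have := constant_of_has_deriv_right_zero (f := fun y => g y + (Real.pi/2) * Real.log (1 - y^2)) (a := 0) (b := k)
    (fun y hy => (hd y hy).continuousAt.continuousWithinAt)
    (fun y hy => (hd y ⟨hy.1, hy.2.le⟩).hasDerivWithinAt) k ⟨hk0, le_rfl⟩
  have g0 : g 0 = 0 := by simp [hg]
  simp only [g0] at this
  simp at this
  change g k = _
  linarith

/-! ## Part 7 -/
def tOf (k x : ℝ) : ℝ := 2 * Real.arcsin (k * Real.sin x)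
def cOf (k x : ℝ) : ℝ := Real.sqrt (1 - (k * Real.sin x)^2)
def mOf (k x : ℝ) : ℂ := ((2 * k^2 : ℝ) : ℂ) + Complex.I * (((2 - 2*k^2) * ((k * Real.sin x) / cOf k x) : ℝ) : ℂ)

lemma cov {φ k : ℝ} (h0 : 0 ≤ φ) (h1 : φ < Real.pi/2) (hk : k = Real.sin (Real.pi/4 - φ/2)) (g : ℝ → ℂ) :
    ∫ θ in φ..(Real.pi - φ), g θ =
      ∫ x in (-(Real.pi/2))..(Real.pi/2), ((2 * k * Real.cos x / cOf k x : ℝ) : ℂ) * g (Real.pi/2 + tOf k x) := by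
  have hpi := Real.pi_pos
  have hk0 : 0 < k := by rw [hk]; exact Real.sin_pos_of_pos_of_lt_pi (by linarith) (by linarith)
  have hk1 : k < 1 := by
    rw [hk, ← Real.sin_pi_div_two]
    exact Real.sin_lt_sin_of_lt_of_le_pi_div_two (by linarith) le_rfl (by linarith)
  have hka : |k| < 1 := by rw [abs_of_pos hk0]; exact hk1
  have hak : Real.arcsin k = Real.pi/4 - φ/2 := by
    rw [hk]; exact Real.arcsin_sin (by linarith) (by linarith)
  rw [intervalIntegral.integral_of_le (by linarith), intervalIntegral.integral_of_le (by linarith),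
    integral_Ioc_eq_integral_Ioo, integral_Ioc_eq_integral_Ioo]
  set s := Set.Ioo (-(Real.pi/2)) (Real.pi/2) with hs
  have hsin : ∀ x ∈ s, -1 < Real.sin x ∧ Real.sin x < 1 := by
    intro x hx
    constructor
    · rw [← (by simp : Real.sin (-(Real.pi/2)) = -1)]
      exact Real.sin_lt_sin_of_lt_of_le_pi_div_two (by linarith [hx.1]) (by linarith [hx.2]) hx.1
    · rw [← Real.sin_pi_div_two]
      exact Real.sin_lt_sin_of_lt_of_le_pi_div_two (by linarith [hx.1]) (by linarith [hx.2]) hx.2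
  have himg : (fun x => Real.pi/2 + tOf k x) '' s = Set.Ioo φ (Real.pi - φ) := by
    ext θ
    constructor
    · rintro ⟨x, hx, rfl⟩
      have h := hsin x hx
      have a1 : Real.arcsin (k * Real.sin x) < Real.arcsin k :=
        Real.strictMonoOn_arcsin ⟨by nlinarith, by nlinarith⟩ ⟨by linarith, by linarith⟩ (by nlinarith)
      have a2 : Real.arcsin (-k) < Real.arcsin (k * Real.sin x) :=
        Real.strictMonoOn_arcsin ⟨by nlinarith, by nlinarith⟩ ⟨by nlinarith, by nlinarith⟩ (by nlinarith)
      rw [Real.arcsin_neg] at a2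
      simp only [tOf]
      constructor <;> linarith
    · rintro ⟨hθ1, hθ2⟩
      have b1 : Real.sin ((θ - Real.pi/2)/2) < k := by
        rw [hk]
        exact Real.sin_lt_sin_of_lt_of_le_pi_div_two (by linarith) (by linarith) (by linarith)
      have b2 : -k < Real.sin ((θ - Real.pi/2)/2) := by
        rw [hk, ← Real.sin_neg]
        exact Real.sin_lt_sin_of_lt_of_le_pi_div_two (by linarith) (by linarith) (by linarith)
      have c1 : Real.sin ((θ - Real.pi/2)/2) / k < 1 := by rw [div_lt_one hk0]; exact b1
      have c2 : -1 < Real.sin ((θ - Real.pi/2)/2) / k := by rw [lt_div_iff₀ hk0]; linarith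
      refine ⟨Real.arcsin (Real.sin ((θ - Real.pi/2)/2) / k), ⟨?_, ?_⟩, ?_⟩
      · exact Real.neg_pi_div_two_lt_arcsin.2 c2
      · exact Real.arcsin_lt_pi_div_two.2 c1
      · simp only [tOf]
        rw [Real.sin_arcsin c2.le c1.le, mul_div_cancel₀ _ hk0.ne', Real.arcsin_sin (by linarith) (by linarith)]
        ring
  have hder : ∀ x ∈ s, HasDerivWithinAt (fun x => Real.pi/2 + tOf k x) (2 * k * Real.cos x / cOf k x) s x := by
    intro x _
    have h3 := abs_lt.1 (ksin hka x)
    have h4 := (Real.hasDerivAt_arcsin (x := k * Real.sin x) (by linarith) (by linarith)).comp x ((Real.hasDerivAt_sin x).const_mul k)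
    refine (HasDerivAt.congr_deriv ((h4.const_mul 2).const_add (Real.pi/2)) ?_).hasDerivWithinAt
    unfold cOf
    ring
  have hinj : Set.InjOn (fun x => Real.pi/2 + tOf k x) s := by
    intro x hx y hy hxy
    simp only [tOf] at hxy
    have h3 := abs_lt.1 (ksin hka x)
    have h4 := abs_lt.1 (ksin hka y)
    have h5 : k * Real.sin x = k * Real.sin y :=
      Real.strictMonoOn_arcsin.injOn ⟨h3.1.le, h3.2.le⟩ ⟨h4.1.le, h4.2.le⟩ (by linarith)
    exact Real.injOn_sin ⟨hx.1.le, hx.2.le⟩ ⟨hy.1.le, hy.2.le⟩ (mul_left_cancel₀ hk0.ne' h5)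
  rw [← himg, integral_image_eq_integral_abs_deriv_smul measurableSet_Ioo hder hinj]
  apply setIntegral_congr_fun measurableSet_Ioo
  intro x hx
  have hcos := Real.cos_pos_of_mem_Ioo hx
  have hc : 0 < cOf k x := Real.sqrt_pos.2 (sqpos (ksin hka x))
  simp only
  rw [abs_of_pos (by positivity), Complex.real_smul]

lemma rparams {r : ℝ} (hr : 1 ≤ r) : 0 ≤ phiOf r ∧ phiOf r < Real.pi/2 ∧ 0 < b2abs r ∧
    (b2Of r).im = b2abs r * Real.sin (phiOf r) := by
  have h0 : 0 ≤ (r-1)/(r+1) := div_nonneg (by linarith) (by linarith)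
  have h1 : (r-1)/(r+1) < 1 := by rw [div_lt_one (by linarith)]; linarith
  have p0 : 0 ≤ phiOf r := Real.arcsin_nonneg.2 h0
  have p1 : phiOf r < Real.pi/2 := Real.arcsin_lt_pi_div_two.2 h1
  refine ⟨p0, p1, ?_, ?_⟩
  · unfold b2abs
    have := Real.cos_pos_of_mem_Ioo (x := phiOf r) ⟨by linarith [Real.pi_pos], p1⟩
    have h3 : 0 < r ^ ((1 - r) / (2 * (1 + r))) := Real.rpow_pos_of_pos (by linarith) _
    positivity
  · unfold b2Of
    rw [Complex.im_ofReal_mul, Complex.exp_ofReal_mul_I_im]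

lemma sin_phi_k (φ : ℝ) : Real.sin φ = 1 - 2 * Real.sin (Real.pi/4 - φ/2)^2 := by
  have h := Real.cos_two_mul (Real.pi/4 - φ/2)
  have h2 := Real.sin_sq_add_cos_sq (Real.pi/4 - φ/2)
  have h3 : Real.cos (2 * (Real.pi/4 - φ/2)) = Real.sin φ := by
    rw [← Real.cos_pi_div_two_sub]; congr 1; ring
  linarith

def wOf (r s k x : ℝ) : ℂ := ((s ^ rhoOf r * b2abs r : ℝ) : ℂ) * Complex.exp ((tOf k x : ℝ) * Complex.I)

lemma exp_half {k x : ℝ} (hk : |k| < 1) : Complex.exp ((tOf k x : ℝ) * Complex.I) =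
   (((cOf k x : ℝ) : ℂ) + Complex.I * ((k * Real.sin x : ℝ) : ℂ))^2 := by
  have h3 := abs_lt.1 (ksin hk x)
  have h : Complex.exp ((tOf k x : ℝ) * Complex.I) = Complex.exp ((Real.arcsin (k * Real.sin x) : ℝ) * Complex.I)^2 := by
    rw [← Complex.exp_nat_mul]; congr 1; unfold tOf; push_cast; ring
  rw [h, Complex.exp_mul_I, ← Complex.ofReal_cos, ← Complex.ofReal_sin, Real.cos_arcsin, Real.sin_arcsin h3.1.le h3.2.le]
  unfold cOf
  ring

lemma point_eq {r ν s k : ℝ} (hr : 1 ≤ r) (hν : -1 < ν) (hs : 0 < s)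
    (hk : k = Real.sin (Real.pi/4 - phiOf r/2)) (hk0 : 0 < k) (hk1 : k < 1) {x : ℝ}
    (hx : x ∈ Set.Ioo (-(Real.pi/2)) (Real.pi/2)) :
    ((2 * k * Real.cos x / cOf k x : ℝ) : ℂ) *
     ((fun ζ => PsiOf r ν s ζ * (1 - Complex.I * ((b2Of r).im : ℂ) / ζ) * (rBranch r ζ)⁻¹)
       ((b2abs r : ℂ) * Complex.exp (((Real.pi/2 + tOf k x : ℝ)) * Complex.I)) *
      (Complex.I * (b2abs r : ℂ) * Complex.exp (((Real.pi/2 + tOf k x : ℝ)) * Complex.I)))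
    = - ((Pf ((((1 + ν) / 2 : ℝ) : ℂ) + wOf r s k x) - Pf (((1 + ν) / 2 : ℝ) : ℂ)) * mOf k x) := by
  obtain ⟨p0, p1, hR, him⟩ := rparams hr
  have hka : |k| < 1 := by rw [abs_of_pos hk0]; exact hk1
  have hcos := Real.cos_pos_of_mem_Ioo hx
  have hc : 0 < cOf k x := Real.sqrt_pos.2 (sqpos (ksin hka x))
  have hc2 : cOf k x ^2 = 1 - (k * Real.sin x)^2 := Real.sq_sqrt (sqpos (ksin hka x)).le
  have hcs := Real.sin_sq_add_cos_sq x
  have hphi : Real.sin (phiOf r) = 1 - 2*k^2 := by rw [hk]; exact sin_phi_k _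
  set R := b2abs r with hRdef
  set σ := s ^ rhoOf r with hσ
  have hσ0 : 0 < σ := Real.rpow_pos_of_pos hs _
  set C := cOf k x with hC
  set S := k * Real.sin x with hS
  set E : ℂ := (C : ℂ) + Complex.I * (S : ℂ) with hE
  set D : ℂ := (C : ℂ) - Complex.I * (S : ℂ) with hD
  have hCS : (C:ℂ)^2 + (S:ℂ)^2 = 1 := by
    have : C^2 + S^2 = 1 := by linarith
    exact_mod_cast this
  have hED : E * D = 1 := by
    rw [hE, hD]; linear_combination hCS - (S:ℂ)^2 * Complex.I_sq
  have hE0 : E ≠ 0 := left_ne_zero_of_mul_eq_one hED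
  have hexp : Complex.exp (((Real.pi/2 + tOf k x : ℝ)) * Complex.I) = Complex.I * E^2 := by
    have e : (((Real.pi/2 + tOf k x : ℝ)) : ℂ) * Complex.I = Real.pi/2 * Complex.I + (tOf k x : ℝ) * Complex.I := by
      push_cast; ring
    rw [hE, ← exp_half hka, e, Complex.exp_add, Complex.exp_pi_div_two_mul_I]
  have hw : wOf r s k x = σ * R * E^2 := by
    unfold wOf; rw [exp_half hka, Complex.ofReal_mul]
  have hwre : 0 ≤ (wOf r s k x).re := by
    rw [hw]
    have e : (σ:ℂ) * R * E^2 = ((σ * R * (C^2 - S^2) : ℝ) : ℂ) + ((σ * R * (2 * C * S) : ℝ) : ℂ) * Complex.I := by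
      rw [hE]; push_cast; linear_combination σ * R * (S:ℂ)^2 * Complex.I_sq
    rw [e]
    have : 0 ≤ C^2 - S^2 := by
      have hk2 : 0 ≤ 1 - 2 * k^2 := by
        rw [← hphi]; exact Real.sin_nonneg_of_nonneg_of_le_pi p0 (by linarith [Real.pi_pos])
      have h5 : S^2 ≤ k^2 := by rw [hS]; nlinarith [sq_nonneg (Real.cos x), sq_nonneg k]
      rw [hc2]; linarith
    have h6 : 0 ≤ σ * R * (C^2 - S^2) := mul_nonneg (by positivity) this
    rw [Complex.add_re, Complex.ofReal_re, Complex.re_ofReal_mul, Complex.I_re, mul_zero, add_zero]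
    exact h6
  have hR0 : (R:ℂ) ≠ 0 := by exact_mod_cast hR.ne'
  have hC0 : (C:ℂ) ≠ 0 := by exact_mod_cast hc.ne'
  have hPsi : PsiOf r ν s ((R:ℂ) * (Complex.I * E^2)) =
      Complex.I * (Pf ((((1 + ν) / 2 : ℝ) : ℂ) + wOf r s k x) - Pf (((1 + ν) / 2 : ℝ) : ℂ)) := by
    rw [← F_int (by linarith) hwre]
    unfold PsiOf
    rw [← mul_assoc Complex.I (wOf r s k x)]
    refine congrArg₂ (· * ·) ?_ ?_
    · rw [hw]; ring
    · apply intervalIntegral.integral_congr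
      intro t _
      simp only
      congr 1
      rw [hw]
      linear_combination (-1 : ℂ) * σ * t * R * E^2 * Complex.I_sq
  have hcx : (k:ℂ) * (Real.cos x : ℂ) ≠ 0 := by
    have : k * Real.cos x ≠ 0 := by positivity
    exact_mod_cast this
  have hrB : rBranch r ((R:ℂ) * (Complex.I * E^2)) = (R:ℂ) * (Complex.I * E^2) * (2 * k * Real.cos x * D) := by
    unfold rBranch
    congr 1
    have hz : 0 < ((2 * k * Real.cos x * D : ℂ)).re := by
      have e : (2 * k * Real.cos x * D : ℂ) = ((2 * k * Real.cos x * C : ℝ) : ℂ) - ((2 * k * Real.cos x * S : ℝ) : ℂ) * Complex.I := by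
        rw [hD]; push_cast; ring
      rw [e]
      simp only [Complex.sub_re, Complex.ofReal_re, Complex.mul_re, Complex.ofReal_im, Complex.I_re, Complex.I_im]
      have : 0 < 2 * k * Real.cos x * C := by positivity
      linarith
    have h2 : ((1:ℂ)/2) = 2⁻¹ := by norm_num
    rw [h2]
    refine Eq.trans ?_ (Complex.sq_cpow_two_inv hz)
    refine congrArg (fun q : ℂ => q ^ (2⁻¹ : ℂ)) ?_
    rw [him, hphi]
    have hDE : D = 1 / E := by field_simp; rw [mul_comm]; exact hED
    have hcs' : ((Real.cos x : ℝ):ℂ)^2 = 1 - (Real.sin x : ℂ)^2 := by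
      have : Real.cos x ^2 = 1 - Real.sin x^2 := by linarith
      exact_mod_cast this
    have hsum : E^2 + D^2 = 2 - 4 * (k:ℂ)^2 * (Real.sin x:ℂ)^2 := by
      have hS' : (S:ℂ) = k * Real.sin x := by rw [hS]; push_cast; rfl
      rw [hE, hD]
      rw [hS'] at hCS ⊢
      linear_combination 2 * hCS + 2 * ((k:ℂ) * Real.sin x)^2 * Complex.I_sq
    have e1 : (1:ℂ) - 2 * Complex.I * ((R * (1 - 2 * k^2) : ℝ) : ℂ) / ((R:ℂ) * (Complex.I * E^2)) - (R:ℂ)^2 / ((R:ℂ) * (Complex.I * E^2))^2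
        = 1 - 2 * (1 - 2 * k^2) * D^2 + D^4 := by
      rw [hDE]
      push_cast
      field_simp
      rw [Complex.I_sq]
      ring
    rw [e1]
    have : (2 * k * Real.cos x * D : ℂ)^2 = 4 * k^2 * (1 - (Real.sin x : ℂ)^2) * D^2 := by
      rw [← hcs']; ring
    rw [this]
    linear_combination D^2 * hsum - (1 + E * D) * hED
  have hm : mOf k x = (2*k^2 * C + Complex.I * (2 - 2*k^2) * S) / C := by
    unfold mOf
    rw [← hC, ← hS]
    push_cast
    field_simp
  have hD0 : D ≠ 0 := right_ne_zero_of_mul_eq_one hED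
  rw [hexp, hm]
  simp only
  rw [hPsi, hrB, him, hphi]
  generalize Pf ((((1 + ν) / 2 : ℝ) : ℂ) + wOf r s k x) - Pf (((1 + ν) / 2 : ℝ) : ℂ) = F
  have hDE : D = 1 / E := by field_simp; rw [mul_comm]; exact hED
  have key : (1 - Complex.I * ((R * (1 - 2 * k^2) : ℝ) : ℂ) / ((R:ℂ) * (Complex.I * E^2))) = 1 - (1 - 2*k^2) * D^2 := by
    rw [hDE]; push_cast; field_simp
  rw [key]
  have h7 : (2*k^2 * C + Complex.I * (2 - 2*k^2) * S : ℂ) = E - (1 - 2*k^2) * D := by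
    rw [hE, hD]; ring
  rw [h7, hDE]
  have hk0' : (k:ℂ) ≠ 0 := left_ne_zero_of_mul hcx
  have hcos' : ((Real.cos x : ℝ):ℂ) ≠ 0 := right_ne_zero_of_mul hcx
  rw [Complex.ofReal_div, Complex.ofReal_mul, Complex.ofReal_mul]
  push_cast
  rw [← Complex.ofReal_cos]
  field_simp
  rw [Complex.I_sq]
  ring

lemma J_eq {r ν s k : ℝ} (hr : 1 ≤ r) (hν : -1 < ν) (hs : 0 < s)
    (hk : k = Real.sin (Real.pi/4 - phiOf r/2)) (hk0 : 0 < k) (hk1 : k < 1) :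
    Jfun r ν s = (((1 + r) / (2 * Real.pi) : ℝ) : ℂ) * ∫ x in (-(Real.pi/2))..(Real.pi/2),
     - ((Pf ((((1 + ν) / 2 : ℝ) : ℂ) + wOf r s k x) - Pf (((1 + ν) / 2 : ℝ) : ℂ)) * mOf k x) := by
  obtain ⟨p0, p1, hR, him⟩ := rparams hr
  have hpi := Real.pi_pos
  have hpi' : (Real.pi : ℂ) ≠ 0 := by exact_mod_cast hpi.ne'
  unfold Jfun arcIntegral
  rw [cov p0 p1 hk]
  congr 1
  · push_cast; field_simp
  · rw [intervalIntegral.integral_of_le (by linarith), intervalIntegral.integral_of_le (by linarith),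
      integral_Ioc_eq_integral_Ioo, integral_Ioc_eq_integral_Ioo]
    apply setIntegral_congr_fun measurableSet_Ioo
    intro x hx
    exact point_eq hr hν hs hk hk0 hk1 hx

/-! ## Part 8 -/
lemma odd_int {f : ℝ → ℝ} (hf : ∀ x, f (-x) = - f x) (b : ℝ) : ∫ x in (-b)..b, f x = 0 := by
  have h := intervalIntegral.integral_comp_neg (a := -b) (b := b) f
  simp only [hf, neg_neg] at h
  rw [intervalIntegral.integral_neg] at h
  linarith

lemma cOf_cont {k : ℝ} : Continuous (cOf k) := by unfold cOf; fun_prop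
lemma tOf_cont {k : ℝ} : Continuous (tOf k) := by unfold tOf; fun_prop
lemma cOf_pos {k : ℝ} (hk : |k| < 1) (x : ℝ) : 0 < cOf k x := Real.sqrt_pos.2 (sqpos (ksin hk x))

lemma tan_cont {k : ℝ} (hk : |k| < 1) : Continuous (fun x => (k * Real.sin x) / cOf k x) := by
  have := cOf_cont (k := k)
  exact Continuous.div (by fun_prop) (by fun_prop) (fun x => (cOf_pos hk x).ne')

lemma mOf_cont {k : ℝ} (hk : |k| < 1) : Continuous (mOf k) := by
  have := tan_cont hk
  unfold mOf
  fun_prop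

lemma wOf_cont {r s k : ℝ} : Continuous (wOf r s k) := by
  have := tOf_cont (k := k)
  unfold wOf
  fun_prop

lemma wOf_norm {r s k : ℝ} (hr : 1 ≤ r) (hs : 0 < s) (x : ℝ) : ‖wOf r s k x‖ = s ^ rhoOf r * b2abs r := by
  obtain ⟨-, -, hR, -⟩ := rparams hr
  have hσ0 : 0 < s ^ rhoOf r := Real.rpow_pos_of_pos hs _
  unfold wOf
  rw [norm_mul, Complex.norm_exp_ofReal_mul_I, mul_one, Complex.norm_real, Real.norm_of_nonneg (by positivity)]

lemma wOf_re {r s k : ℝ} (hr : 1 ≤ r) (hs : 0 < s) (hk : |k| < 1) (hk2 : 0 ≤ 1 - 2*k^2) (x : ℝ) :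
    0 ≤ (wOf r s k x).re := by
  obtain ⟨-, -, hR, -⟩ := rparams hr
  have hσ0 : 0 < s ^ rhoOf r := Real.rpow_pos_of_pos hs _
  have hc2 : cOf k x ^2 = 1 - (k * Real.sin x)^2 := Real.sq_sqrt (sqpos (ksin hk x)).le
  unfold wOf
  rw [Complex.re_ofReal_mul, Complex.exp_ofReal_mul_I_re]
  have h3 := abs_lt.1 (ksin hk x)
  have hcos : Real.cos (tOf k x) = 1 - 2 * (k * Real.sin x)^2 := by
    unfold tOf
    have := Real.sin_sq_add_cos_sq (Real.arcsin (k * Real.sin x))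
    rw [Real.cos_two_mul]
    rw [Real.sin_arcsin h3.1.le h3.2.le] at this
    linarith
  rw [hcos]
  have h5 : (k * Real.sin x)^2 ≤ k^2 := by
    have := Real.sin_sq_add_cos_sq x
    nlinarith [sq_nonneg (Real.cos x), sq_nonneg k, mul_nonneg (sq_nonneg k) (sq_nonneg (Real.cos x))]
  exact mul_nonneg (by positivity) (by linarith)

lemma wOf_log {r s k : ℝ} (hr : 1 ≤ r) (hs : 0 < s) (hk : |k| < 1) (x : ℝ) :
    Complex.log (wOf r s k x) = ((rhoOf r * Real.log s : ℝ) : ℂ) + ((Real.log (b2abs r) : ℝ) + (tOf k x : ℝ) * Complex.I) := by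
  obtain ⟨-, -, hR, -⟩ := rparams hr
  have hσ0 : 0 < s ^ rhoOf r := Real.rpow_pos_of_pos hs _
  have h3 := abs_lt.1 (ksin hk x)
  have a1 := Real.neg_pi_div_two_lt_arcsin.2 h3.1
  have a2 := Real.arcsin_lt_pi_div_two.2 h3.2
  unfold wOf
  rw [Complex.log_ofReal_mul (by positivity) (Complex.exp_ne_zero _), Complex.log_exp, Real.log_mul hσ0.ne' hR.ne', Real.log_rpow hs]
  · push_cast; ring
  · simp [tOf]; linarith
  · simp [tOf]; linarith

lemma m_int {k : ℝ} (hk : |k| < 1) : ∫ x in (-(Real.pi/2))..(Real.pi/2), mOf k x = 2 * k^2 * Real.pi := by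
  have hc := tan_cont hk
  unfold mOf
  rw [intervalIntegral.integral_add ((by fun_prop : Continuous _).intervalIntegrable _ _) ((by fun_prop : Continuous _).intervalIntegrable _ _),
    intervalIntegral.integral_const_mul, intervalIntegral.integral_ofReal, intervalIntegral.integral_ofReal, intervalIntegral.integral_const, odd_int]
  · simp; ring
  · intro x; simp [cOf]; ring

lemma tm_int {k : ℝ} (hk0 : 0 ≤ k) (hk1 : k < 1) : ∫ x in (-(Real.pi/2))..(Real.pi/2), ((tOf k x : ℝ) * Complex.I) * mOf k x
    = (((2 - 2*k^2) * Real.pi * Real.log (1 - k^2) : ℝ) : ℂ) := by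
  have hk : |k| < 1 := by rw [abs_of_nonneg hk0]; exact hk1
  have hc := tan_cont hk
  have ht := tOf_cont (k := k)
  have hg := g_eq hk0 hk1
  have e : ∀ x, ((tOf k x : ℝ) * Complex.I) * mOf k x = (2 * k^2 * Complex.I) * ((tOf k x : ℝ) : ℂ) +
     (((-2 * (2-2*k^2)) * ((k * Real.sin x) * Hf (k * Real.sin x)) : ℝ) : ℂ) := by
    intro x
    have : tOf k x * ((k * Real.sin x) / cOf k x) = 2 * ((k * Real.sin x) * Hf (k * Real.sin x)) := by
      unfold tOf Hf cOf; ring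
    have h2 : ((tOf k x : ℝ) : ℂ) * (((k * Real.sin x) / cOf k x : ℝ) : ℂ) = 2 * (((k * Real.sin x) * Hf (k * Real.sin x) : ℝ) : ℂ) := by
      rw [← Complex.ofReal_mul, this]; push_cast; ring
    unfold mOf
    rw [Complex.ofReal_mul (2 - 2*k^2), Complex.ofReal_mul (-2 * (2-2*k^2))]
    generalize (((k * Real.sin x) * Hf (k * Real.sin x) : ℝ) : ℂ) = A at *
    generalize (((k * Real.sin x) / cOf k x : ℝ) : ℂ) = B at *
    push_cast
    linear_combination (-(2 - 2 * (k:ℂ)^2)) * h2 + (2 - 2 * (k:ℂ)^2) * (tOf k x : ℂ) * B * Complex.I_sq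
  have hH := Hf_cont hk
  simp_rw [e]
  rw [intervalIntegral.integral_add ((by fun_prop : Continuous _).intervalIntegrable _ _) ((by fun_prop : Continuous _).intervalIntegrable _ _),
    intervalIntegral.integral_const_mul, intervalIntegral.integral_ofReal, intervalIntegral.integral_ofReal,
    intervalIntegral.integral_const_mul, hg, odd_int]
  · push_cast; ring
  · intro x; simp [tOf]

lemma lin6 {f1 f2 f3 f4 f5 f6 : ℝ → ℂ} (h1 : Continuous f1) (h2 : Continuous f2) (h3 : Continuous f3)
    (h4 : Continuous f4) (h5 : Continuous f5) (h6 : Continuous f6) (c1 c2 c3 c4 c5 : ℂ) (p q : ℝ) :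
    ∫ x in p..q, (c1 * f1 x + c2 * f2 x + c3 * f3 x + c4 * f4 x + c5 * f5 x + f6 x) =
     c1 * (∫ x in p..q, f1 x) + c2 * (∫ x in p..q, f2 x) + c3 * (∫ x in p..q, f3 x) + c4 * (∫ x in p..q, f4 x)
      + c5 * (∫ x in p..q, f5 x) + ∫ x in p..q, f6 x := by
  rw [intervalIntegral.integral_add, intervalIntegral.integral_add, intervalIntegral.integral_add,
    intervalIntegral.integral_add, intervalIntegral.integral_add]
  · simp only [intervalIntegral.integral_const_mul]
  all_goals exact (by fun_prop : Continuous _).intervalIntegrable _ _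

/-- The exact constant produced by the expansion. -/
def kap (r a k : ℝ) : ℂ := - (((1 + r) / (2 * Real.pi) : ℝ) : ℂ) *
  ((((a:ℂ)^2/2 - a/2 + 1/12) * (Real.log (b2abs r) : ℝ) +
    ((Real.log (2*Real.pi)/2 : ℝ) * a + (1/12 - deriv riemannZeta (-1)) - Pf a)) * (2 * k^2 * Real.pi)
   + ((a:ℂ)^2/2 - a/2 + 1/12) * (((2 - 2*k^2) * Real.pi * Real.log (1 - k^2) : ℝ) : ℂ))

lemma expansion {r ν k : ℝ} (hr : 1 ≤ r) (hν : -1 < ν)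
    (hk : k = Real.sin (Real.pi/4 - phiOf r/2)) (hk0 : 0 < k) (hk1 : k < 1) :
    HasStdExpansion (rhoOf r) (Jfun r ν) (kap r ((1+ν)/2) k) := by
  obtain ⟨p0, p1, hR, him⟩ := rparams hr
  have hka : |k| < 1 := by rw [abs_of_pos hk0]; exact hk1
  have hk2 : 0 ≤ 1 - 2*k^2 := by
    rw [hk, ← sin_phi_k]; exact Real.sin_nonneg_of_nonneg_of_le_pi p0 (by linarith [Real.pi_pos])
  have hpi := Real.pi_pos
  set a := (1+ν)/2 with ha_def
  have ha : 0 < a := by linarith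
  set R := b2abs r with hRd
  set ρ := rhoOf r with hρd
  have hρ : 0 < ρ := by rw [hρd, rhoOf]; positivity
  have hm := mOf_cont hka
  have ht := tOf_cont (k := k)
  set L : ℂ := ((a:ℂ)^2/2 - a/2 + 1/12) with hL
  set K : ℂ := ((Real.log (2*Real.pi)/2 : ℝ) * a + (1/12 - deriv riemannZeta (-1)) - Pf a) with hK
  set B : ℂ := (1/2 - a + (Real.log (2*Real.pi)/2 : ℝ)) with hB
  set p : ℂ := (((1 + r) / (2 * Real.pi) : ℝ) : ℂ) with hp
  set e : ℝ → ℂ := fun x => Complex.exp ((tOf k x : ℝ) * Complex.I) with he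
  have hec : Continuous e := by rw [he]; fun_prop
  set Λ : ℝ → ℂ := fun x => (Real.log R : ℝ) + (tOf k x : ℝ) * Complex.I with hΛ
  have hΛc : Continuous Λ := by rw [hΛ]; fun_prop
  set f1 : ℝ → ℂ := fun x => R^2 * e x^2/2 * ρ * mOf k x with hf1
  set f2 : ℝ → ℂ := fun x => (R^2 * e x^2/2 * Λ x - 3/4 * (R^2 * e x^2)) * mOf k x with hf2
  set f4 : ℝ → ℂ := fun x => (a - 1/2) * R * e x * ρ * mOf k x with hf4
  set f5 : ℝ → ℂ := fun x => ((a - 1/2) * R * e x * Λ x + B * R * e x) * mOf k x with hf5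
  set f7 : ℝ → ℂ := fun x => L * ρ * mOf k x with hf7
  set f8 : ℝ → ℂ := fun x => (L * Λ x + K) * mOf k x with hf8
  have c1 : Continuous f1 := by rw [hf1]; fun_prop
  have c2 : Continuous f2 := by rw [hf2]; fun_prop
  have c4 : Continuous f4 := by rw [hf4]; fun_prop
  have c5 : Continuous f5 := by rw [hf5]; fun_prop
  have c7 : Continuous f7 := by rw [hf7]; fun_prop
  have c8 : Continuous f8 := by rw [hf8]; fun_prop
  have hI8 : ∫ x in (-(Real.pi/2))..(Real.pi/2), f8 x =
      (L * (Real.log R : ℝ) + K) * (2 * k^2 * Real.pi) + L * (((2 - 2*k^2) * Real.pi * Real.log (1 - k^2) : ℝ) : ℂ) := by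
    have : ∀ x, f8 x = (L * (Real.log R : ℝ) + K) * mOf k x + L * (((tOf k x : ℝ) * Complex.I) * mOf k x) := by
      intro x; simp only [hf8, hΛ]; ring
    simp_rw [this]
    rw [intervalIntegral.integral_add ((by fun_prop : Continuous _).intervalIntegrable _ _) ((by fun_prop : Continuous _).intervalIntegrable _ _),
      intervalIntegral.integral_const_mul, intervalIntegral.integral_const_mul, m_int hka, tm_int hk0.le hk1]
  obtain ⟨M, hM⟩ := (isCompact_Icc (a := -(Real.pi/2)) (b := Real.pi/2)).exists_bound_of_continuousOn hm.continuousOn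
  refine ⟨-p * ∫ x in (-(Real.pi/2))..(Real.pi/2), f1 x, -p * ∫ x in (-(Real.pi/2))..(Real.pi/2), f2 x, 0,
    -p * ∫ x in (-(Real.pi/2))..(Real.pi/2), f4 x, -p * ∫ x in (-(Real.pi/2))..(Real.pi/2), f5 x, 0,
    -p * ∫ x in (-(Real.pi/2))..(Real.pi/2), f7 x, ?_⟩
  apply Asymptotics.IsBigO.of_bound (‖p‖ * ((expC a + 4)/R * M * Real.pi))
  have hσt := (tendsto_rpow_atTop hρ).eventually_ge_atTop (2/R)
  filter_upwards [eventually_ge_atTop (Real.exp 1), hσt] with s hse hsR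
  have hs : 0 < s := (Real.exp_pos 1).trans_le hse
  have hl : 1 ≤ Real.log s := by rw [Real.le_log_iff_exp_le hs]; exact hse
  have hσ0 : 0 < s ^ ρ := Real.rpow_pos_of_pos hs _
  have hσ2 : s ^ (2 * ρ) = (s ^ ρ)^2 := by
    rw [mul_comm, Real.rpow_mul hs.le]; norm_cast
  have hσi : s ^ (-ρ) = (s^ρ)⁻¹ := Real.rpow_neg hs.le _
  rw [div_le_iff₀ hR] at hsR
  set σ := s ^ ρ with hσd
  have hcF : Continuous (fun x => Pf ((a:ℂ) + wOf r s k x)) := by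
    rw [continuous_iff_continuousAt]
    intro x
    have h1 : 0 < ((a:ℂ) + wOf r s k x).re := by
      have := wOf_re hr hs hka hk2 x
      simp; linarith
    have h2 : Continuous (fun x => (a:ℂ) + wOf r s k x) := wOf_cont.const_add _
    exact ContinuousAt.comp (f := fun x => (a:ℂ) + wOf r s k x) (Pf_deriv h1).continuousAt h2.continuousAt
  have hsplit : ∀ x, - ((Pf ((a : ℂ) + wOf r s k x) - Pf a) * mOf k x) =
      - ((Pf ((a : ℂ) + wOf r s k x) - Pf a - mainF a (wOf r s k x)) * mOf k x)
      + (-1) * ((σ^2 * (Real.log s : ℝ)) * f1 x + σ^2 * f2 x + (σ * (Real.log s : ℝ)) * f4 x + σ * f5 x + (Real.log s : ℝ) * f7 x + f8 x) := by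
    intro x
    have hw : wOf r s k x = σ * R * e x := by
      unfold wOf; rw [Complex.ofReal_mul]
    have hmain : mainF a (wOf r s k x) = (wOf r s k x^2/2 + (a - 1/2) * wOf r s k x + L) * ((ρ * Real.log s : ℝ) + Λ x)
         - 3/4 * wOf r s k x^2 + B * wOf r s k x + K := by
      unfold mainF
      rw [wOf_log hr hs hka]
    rw [hmain, hw]
    simp only [hf1, hf2, hf4, hf5, hf7, hf8]
    push_cast
    ring
  have hcM : Continuous (fun x => (σ^2 * (Real.log s : ℝ)) * f1 x + σ^2 * f2 x + (σ * (Real.log s : ℝ)) * f4 x + σ * f5 x + (Real.log s : ℝ) * f7 x + f8 x) := by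
    fun_prop
  have hcE : Continuous (fun x => - ((Pf ((a : ℂ) + wOf r s k x) - Pf a - mainF a (wOf r s k x)) * mOf k x)) := by
    have e2 : (fun x => - ((Pf ((a : ℂ) + wOf r s k x) - Pf a - mainF a (wOf r s k x)) * mOf k x)) =
       fun x => - ((Pf ((a : ℂ) + wOf r s k x) - Pf a) * mOf k x) - (-1) * ((σ^2 * (Real.log s : ℝ)) * f1 x + σ^2 * f2 x + (σ * (Real.log s : ℝ)) * f4 x + σ * f5 x + (Real.log s : ℝ) * f7 x + f8 x) := by
      funext x; rw [hsplit x]; ring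
    rw [e2]
    fun_prop
  have hJ := J_eq hr hν hs hk hk0 hk1
  rw [← ha_def] at hJ
  simp_rw [hsplit] at hJ
  rw [intervalIntegral.integral_add (hcE.intervalIntegrable _ _) ((hcM.const_mul (-1:ℂ)).intervalIntegrable _ _),
    intervalIntegral.integral_const_mul, lin6 c1 c2 c4 c5 c7 c8, hI8] at hJ
  have hErr : ‖∫ x in (-(Real.pi/2))..(Real.pi/2), - ((Pf ((a : ℂ) + wOf r s k x) - Pf a - mainF a (wOf r s k x)) * mOf k x)‖
      ≤ ((expC a + 4)/(σ * R) * M) * |Real.pi/2 - -(Real.pi/2)| := by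
    apply intervalIntegral.norm_integral_le_of_norm_le_const
    intro x hx
    rw [Set.uIoc_of_le (by linarith)] at hx
    have hn := wOf_norm (k := k) hr hs x
    have h1 := F_asym ha (wOf_re hr hs hka hk2 x) (by rw [hn]; exact hsR)
    rw [hn] at h1
    rw [norm_neg, norm_mul]
    exact mul_le_mul h1 (hM x ⟨hx.1.le, hx.2⟩) (norm_nonneg _) ((norm_nonneg _).trans h1)
  have hfin : Jfun r ν s - ((-p * ∫ x in (-(Real.pi/2))..(Real.pi/2), f1 x) * (s ^ (2 * ρ) : ℝ) * (Real.log s : ℝ) + (-p * ∫ x in (-(Real.pi/2))..(Real.pi/2), f2 x) * (s ^ (2 * ρ) : ℝ) +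
          0 * (σ : ℝ) * ((Real.log s : ℝ)) ^ 2 + (-p * ∫ x in (-(Real.pi/2))..(Real.pi/2), f4 x) * (σ : ℝ) * (Real.log s : ℝ) +
          (-p * ∫ x in (-(Real.pi/2))..(Real.pi/2), f5 x) * (σ : ℝ) + 0 * ((Real.log s : ℝ)) ^ 2 + (-p * ∫ x in (-(Real.pi/2))..(Real.pi/2), f7 x) * (Real.log s : ℝ) + kap r a k)
       = p * ∫ x in (-(Real.pi/2))..(Real.pi/2), - ((Pf ((a : ℂ) + wOf r s k x) - Pf a - mainF a (wOf r s k x)) * mOf k x) := by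
    rw [hJ, hσ2]
    unfold kap
    rw [← hL, ← hK, ← hp]
    push_cast
    ring
  rw [hfin, norm_mul, mul_assoc]
  refine mul_le_mul_of_nonneg_left (hErr.trans ?_) (norm_nonneg _)
  have hpos : 0 ≤ (expC a + 4)/(σ * R) * M * |Real.pi/2 - -(Real.pi/2)| := (norm_nonneg _).trans hErr
  have habs : |Real.pi/2 - -(Real.pi/2)| = Real.pi := by
    rw [abs_of_pos (by linarith)]; ring
  rw [habs] at hpos ⊢
  rw [hσi, Real.norm_of_nonneg (by positivity)]
  have e3 : (expC a + 4) / R * M * Real.pi * (σ⁻¹ * Real.log s) = ((expC a + 4)/(σ * R) * M * Real.pi) * Real.log s := by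
    field_simp
  rw [e3]
  exact le_mul_of_one_le_right hpos hl

/-- asymptotics of `I_{1,r}`. -/
theorem I1r_asymptotics (r ν : ℝ) (hr : 1 ≤ r) (hν : -1 < ν) :
    HasStdExpansion (rhoOf r) (Jfun r ν)
      ((((1 + r) / 2 : ℝ) : ℂ) *
          ((((1 - 3 * ν ^ 2) / 24 : ℝ) : ℂ) + deriv riemannZeta (-1) -
            ((logBarnesG1p ((ν + 1) / 2 - 1) : ℝ) : ℂ) +
            (((ν - 1) / 2 * Real.log (Real.Gamma ((ν + 1) / 2)) : ℝ) : ℂ)) *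
          (((1 - (b2Of r).im / b2abs r : ℝ) : ℂ)) +
        ((((1 + r) / 48 * (1 - 3 * ν ^ 2) *
            ((1 + (b2Of r).im / b2abs r) * Real.log ((b2abs r + (b2Of r).im) / 2) -
              2 * ((b2Of r).im / b2abs r) * Real.log (b2abs r)) : ℝ)) : ℂ)) := by
  obtain ⟨p0, p1, hR, him⟩ := rparams hr
  have hpi := Real.pi_pos
  obtain ⟨k, hk⟩ : ∃ k, k = Real.sin (Real.pi/4 - phiOf r/2) := ⟨_, rfl⟩
  have hk0 : 0 < k := by rw [hk]; exact Real.sin_pos_of_pos_of_lt_pi (by linarith) (by linarith)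
  have hk1 : k < 1 := by
    rw [hk, ← Real.sin_pi_div_two]
    exact Real.sin_lt_sin_of_lt_of_le_pi_div_two (by linarith) le_rfl (by linarith)
  have hphi : Real.sin (phiOf r) = 1 - 2*k^2 := by rw [hk]; exact sin_phi_k _
  have hpi' : (Real.pi : ℂ) ≠ 0 := by exact_mod_cast hpi.ne'
  have h1k : 0 < 1 - k^2 := by nlinarith
  have hq : (b2Of r).im / b2abs r = 1 - 2*k^2 := by rw [him, hphi]; field_simp
  have hlog : Real.log ((b2abs r + (b2Of r).im) / 2) = Real.log (b2abs r) + Real.log (1 - k^2) := by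
    rw [← Real.log_mul hR.ne' h1k.ne', him, hphi]; congr 1; ring
  have hP := Pf_real (a := (1+ν)/2) (by linarith)
  have hcomm : (1 + ν)/2 = (ν + 1)/2 := by ring
  convert expansion hr hν hk hk0 hk1 using 1
  rw [hq, hlog]
  unfold kap
  rw [hP, hcomm]
  generalize deriv riemannZeta (-1) = Z
  generalize logBarnesG1p ((ν + 1) / 2 - 1) = G
  generalize Real.log (Real.Gamma ((ν + 1) / 2)) = Gm
  generalize Real.log (b2abs r) = LR
  generalize Real.log (1 - k^2) = Lk
  generalize Real.log (2 * Real.pi) = L2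
  push_cast
  field_simp
  ring
end
end

section
/- Let ν ≥ 0 and set m := (1+ν)/2. Then the series S := ∑_{n=0}^∞ [ ln Γ(1+ν+n) + (n+m)·(1 − ln(n+m)) + ((1−3ν²)/24)·ln(1 + 1/(n+1)) − (ν/2)·ln(n+m) − ln(2π)/2 ] converges, and S = (ν/2)·ln Γ(m) − logG(1+ν) + ζ′(−1) + (ν/4)·ln(2π) − (3ν²−1)/24 + ζ′(−1, m+1) − m·ln m. -/
open Complex Filter

noncomputable section

/-- The Hurwitz zeta function `ζ(s,u)` for real `u > 0` (meromorphic continuation of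
`∑_{n≥0} (n+u)^{-s}`), expressed via Mathlib's Hurwitz zeta on the unit circle. -/
def hurwitzZetaR (u : ℝ) (s : ℂ) : ℂ :=
  HurwitzZeta.hurwitzZeta (↑(Int.fract u) : UnitAddCircle) s -
    ∑ n ∈ Finset.range ⌊u⌋₊, (((Int.fract u : ℝ) : ℂ) + (n : ℂ)) ^ (-s)

namespace X2

lemma log_lower2 {y : ℝ} (hy : 0 ≤ y) : y - y ^ 2 / 2 ≤ Real.log (1 + y) := by
  have h : MonotoneOn (fun t : ℝ => Real.log (1 + t) - (t - t ^ 2 / 2)) (Set.Ici 0) := by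
    apply monotoneOn_of_hasDerivWithinAt_nonneg (f' := fun t => 1 / (1 + t) - (1 - t)) (convex_Ici 0)
    · intro t ht
      have : (1 + t) ≠ 0 := by have : 0 ≤ t := ht; positivity
      exact (ContinuousAt.sub (ContinuousAt.log (by fun_prop) this)
        (by fun_prop)).continuousWithinAt
    · intro t ht
      rw [interior_Ici] at ht
      have ht' : 0 < t := ht
      have h1 : HasDerivAt (fun t : ℝ => 1 + t) 1 t := (hasDerivAt_id t).const_add 1
      have h2 := h1.log (by positivity)
      have h3 : HasDerivAt (fun t : ℝ => t - t ^ 2 / 2) (1 - t) t := by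
        have := (hasDerivAt_id t).sub (((hasDerivAt_id t).pow 2).div_const 2)
        refine this.congr_deriv ?_
        simp
      exact (h2.sub h3).hasDerivWithinAt
    · intro t ht
      rw [interior_Ici] at ht
      have ht' : 0 < t := ht
      have : 1 / (1 + t) - (1 - t) = t ^ 2 / (1 + t) := by field_simp; ring
      rw [this]; positivity
  have := h (Set.mem_Ici.2 le_rfl) (Set.mem_Ici.2 hy) hy
  simp at this
  linarith

lemma log_upper3 {y : ℝ} (hy : 0 ≤ y) : Real.log (1 + y) ≤ y - y ^ 2 / 2 + y ^ 3 / 3 := by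
  have h : MonotoneOn (fun t : ℝ => (t - t ^ 2 / 2 + t ^ 3 / 3) - Real.log (1 + t)) (Set.Ici 0) := by
    apply monotoneOn_of_hasDerivWithinAt_nonneg (f' := fun t => (1 - t + t ^ 2) - 1 / (1 + t)) (convex_Ici 0)
    · intro t ht
      have : (1 + t) ≠ 0 := by have : 0 ≤ t := ht; positivity
      exact (ContinuousAt.sub (by fun_prop) (ContinuousAt.log (by fun_prop) this)
        ).continuousWithinAt
    · intro t ht
      rw [interior_Ici] at ht
      have ht' : 0 < t := ht
      have h1 : HasDerivAt (fun t : ℝ => 1 + t) 1 t := (hasDerivAt_id t).const_add 1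
      have h2 := h1.log (by positivity)
      have h3 : HasDerivAt (fun t : ℝ => t - t ^ 2 / 2 + t ^ 3 / 3) (1 - t + t ^ 2) t := by
        have := ((hasDerivAt_id t).sub (((hasDerivAt_id t).pow 2).div_const 2)).add
          (((hasDerivAt_id t).pow 3).div_const 3)
        refine this.congr_deriv ?_
        simp
      exact (h3.sub h2).hasDerivWithinAt
    · intro t ht
      rw [interior_Ici] at ht
      have ht' : 0 < t := ht
      have : (1 - t + t ^ 2) - 1 / (1 + t) = t ^ 3 / (1 + t) := by field_simp; ring
      rw [this]; positivity
  have := h (Set.mem_Ici.2 le_rfl) (Set.mem_Ici.2 hy) hy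
  simp at this
  linarith

lemma log_lower4 {y : ℝ} (hy : 0 ≤ y) :
    y - y ^ 2 / 2 + y ^ 3 / 3 - y ^ 4 / 4 ≤ Real.log (1 + y) := by
  have h : MonotoneOn (fun t : ℝ => Real.log (1 + t) - (t - t ^ 2 / 2 + t ^ 3 / 3 - t ^ 4 / 4))
      (Set.Ici 0) := by
    apply monotoneOn_of_hasDerivWithinAt_nonneg
      (f' := fun t => 1 / (1 + t) - (1 - t + t ^ 2 - t ^ 3)) (convex_Ici 0)
    · intro t ht
      have : (1 + t) ≠ 0 := by have : 0 ≤ t := ht; positivity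
      exact (ContinuousAt.sub (ContinuousAt.log (by fun_prop) this)
        (by fun_prop)).continuousWithinAt
    · intro t ht
      rw [interior_Ici] at ht
      have ht' : 0 < t := ht
      have h1 : HasDerivAt (fun t : ℝ => 1 + t) 1 t := (hasDerivAt_id t).const_add 1
      have h2 := h1.log (by positivity)
      have h3 : HasDerivAt (fun t : ℝ => t - t ^ 2 / 2 + t ^ 3 / 3 - t ^ 4 / 4)
          (1 - t + t ^ 2 - t ^ 3) t := by
        have := (((hasDerivAt_id t).sub (((hasDerivAt_id t).pow 2).div_const 2)).add
          (((hasDerivAt_id t).pow 3).div_const 3)).sub (((hasDerivAt_id t).pow 4).div_const 4)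
        refine this.congr_deriv ?_
        simp
      exact (h2.sub h3).hasDerivWithinAt
    · intro t ht
      rw [interior_Ici] at ht
      have ht' : 0 < t := ht
      have : 1 / (1 + t) - (1 - t + t ^ 2 - t ^ 3) = t ^ 4 / (1 + t) := by field_simp; ring
      rw [this]; positivity
  have := h (Set.mem_Ici.2 le_rfl) (Set.mem_Ici.2 hy) hy
  simp at this
  linarith

/-- scaled remainder of `log (x + a)`. -/
def del (a x : ℝ) : ℝ :=
  x ^ 3 * (Real.log (x + a) - (Real.log x + a / x - a ^ 2 / (2 * x ^ 2)))

lemma log_add_eq (a : ℝ) {x : ℝ} (hx : 0 < x) :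
    Real.log (x + a) = Real.log x + a / x - a ^ 2 / (2 * x ^ 2) + del a x / x ^ 3 := by
  unfold del; field_simp; ring

lemma abs_del_le {a x : ℝ} (ha : 0 ≤ a) (hx : 0 < x) : |del a x| ≤ a ^ 3 := by
  have hy : 0 ≤ a / x := by positivity
  have h1 := log_lower2 hy
  have h2 := log_upper3 hy
  have h3 : Real.log (x + a) = Real.log x + Real.log (1 + a / x) := by
    rw [← Real.log_mul (by positivity) (by positivity)]; congr 1; field_simp
  have e : del a x = x ^ 3 * (Real.log (1 + a / x) - (a / x - (a / x) ^ 2 / 2)) := by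
    unfold del; rw [h3]; field_simp; ring
  have : a ^ 3 = x ^ 3 * (a / x) ^ 3 := by field_simp
  rw [e, abs_of_nonneg (mul_nonneg (by positivity) (by linarith)), this]
  gcongr
  have : 0 ≤ (a / x) ^ 3 := by positivity
  linarith

/-- Stirling main term -/
def R (x : ℝ) : ℝ :=
  (x - 1 / 2) * Real.log x - x + Real.log (2 * Real.pi) / 2 + 1 / (12 * x)

def D (x : ℝ) : ℝ := Real.log (Real.Gamma x) - R x

lemma logGamma_succ {x : ℝ} (hx : 0 < x) :
    Real.log (Real.Gamma (x + 1)) = Real.log (Real.Gamma x) + Real.log x := by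
  rw [Real.Gamma_add_one hx.ne', Real.log_mul hx.ne' (Real.Gamma_pos_of_pos hx).ne', add_comm]

lemma D_step {x : ℝ} (hx : 1 ≤ x) : |D x - D (x + 1)| ≤ 1 / x ^ 3 := by
  have h0 : 0 < x := by linarith
  obtain ⟨y, hy⟩ : ∃ y, y = 1 / x := ⟨_, rfl⟩
  have hy0 : 0 < y := by rw [hy]; positivity
  have hy1 : y ≤ 1 := by rw [hy, div_le_one h0]; exact hx
  have hxy : x = 1 / y := by rw [hy]; field_simp
  have h3 : Real.log (x + 1) = Real.log x + Real.log (1 + y) := by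
    rw [← Real.log_mul (by positivity) (by positivity)]; congr 1; rw [hy]; field_simp
  have e : D x - D (x + 1) = (1 / y + 1 / 2) * Real.log (1 + y) - 1 - y ^ 2 / (12 * (1 + y)) := by
    unfold D R
    rw [logGamma_succ h0, h3]
    have : 1 / (12 * (x + 1)) - 1 / (12 * x) = - (y ^ 2 / (12 * (1 + y))) := by
      rw [hxy]; field_simp; ring
    rw [← hxy]
    linear_combination this
  have h1 := log_lower4 hy0.le
  have h2 := log_upper3 hy0.le
  obtain ⟨d, hd⟩ : ∃ d, Real.log (1 + y) = y - y ^ 2 / 2 + y ^ 3 / 3 - d * y ^ 4 := 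
    ⟨(y - y ^ 2 / 2 + y ^ 3 / 3 - Real.log (1 + y)) / y ^ 4, by field_simp; ring⟩
  have hy4 : 0 < y ^ 4 := by positivity
  have hd0 : 0 ≤ d := by
    by_contra h
    push Not at h
    nlinarith
  have hd1 : d ≤ 1 / 4 := by
    by_contra h
    push Not at h
    nlinarith
  have e2 : D x - D (x + 1) = y ^ 3 * (1 / 6 - d * (1 + y / 2) + 1 / (12 * (1 + y))) := by
    rw [e, hd]; field_simp; ring
  have e3 : 1 / x ^ 3 = y ^ 3 * 1 := by rw [hxy]; field_simp
  have hz0 : 0 < 1 / (12 * (1 + y)) := by positivity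
  have hz1 : 1 / (12 * (1 + y)) ≤ 1 / 12 := by
    apply one_div_le_one_div_of_le <;> linarith
  rw [e2, e3, abs_mul, abs_of_pos (by positivity : 0 < y ^ 3)]
  gcongr
  rw [abs_le]
  constructor <;> nlinarith

lemma D_sub_le {x : ℝ} (hx : 1 ≤ x) (n : ℕ) :
    |D x - D (x + n)| ≤ 2 / x ^ 2 - 2 / (x + n) ^ 2 := by
  induction n with
  | zero => simp
  | succ n ih =>
    have hn : (0 : ℝ) ≤ n := n.cast_nonneg
    have h1 : 1 ≤ x + n := by linarith
    have h := D_step h1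
    set z := x + n with hz
    have hw : 1 / z ^ 3 ≤ 2 / z ^ 2 - 2 / (z + 1) ^ 2 := by
      have : 2 / z ^ 2 - 2 / (z + 1) ^ 2 - 1 / z ^ 3
          = (2 * z * (2 * z + 1) - (z + 1) ^ 2) / (z ^ 3 * (z + 1) ^ 2) := by
        field_simp; ring
      have h2 : 0 ≤ (2 * z * (2 * z + 1) - (z + 1) ^ 2) / (z ^ 3 * (z + 1) ^ 2) := by
        apply div_nonneg
        · nlinarith
        · positivity
      linarith
    have e : x + ((n + 1 : ℕ) : ℝ) = z + 1 := by push_cast; rw [hz]; ring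
    rw [e]
    calc |D x - D (z + 1)| ≤ |D x - D z| + |D z - D (z + 1)| := abs_sub_le _ _ _
      _ ≤ _ := by linarith

lemma tendsto_bdd_div {f : ℕ → ℝ} {C : ℝ} (h : ∀ᶠ n in atTop, |f n| ≤ C) :
    Tendsto (fun n : ℕ => f n / (n : ℝ)) atTop (nhds 0) := by
  have : Tendsto (fun n : ℕ => C / (n : ℝ)) atTop (nhds 0) := tendsto_const_div_atTop_nhds_zero_nat C
  refine squeeze_zero_norm' ?_ this
  filter_upwards [h, eventually_gt_atTop 0] with n hn h0
  have h0 : (0 : ℝ) < n := by exact_mod_cast h0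
  rw [Real.norm_eq_abs, abs_div, abs_of_pos h0]
  gcongr

lemma log_fact_tendsto : Tendsto (fun n : ℕ => Real.log (n.factorial : ℝ) -
    ((n + 1 / 2) * Real.log n - n + Real.log (2 * Real.pi) / 2)) atTop (nhds 0) := by
  have h := (Real.continuousAt_log (Real.sqrt_pos.2 Real.pi_pos).ne').tendsto.comp
    Stirling.tendsto_stirlingSeq_sqrt_pi
  have h2 := h.sub_const (Real.log (Real.sqrt Real.pi))
  rw [sub_self] at h2
  refine h2.congr' ?_
  filter_upwards [eventually_gt_atTop 0] with n h0
  have h0 : (0 : ℝ) < n := by exact_mod_cast h0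
  simp only [Function.comp]
  rw [Stirling.log_stirlingSeq_formula, Real.log_sqrt Real.pi_pos.le,
    Real.log_mul (by norm_num) Real.pi_pos.ne', Real.log_mul (by norm_num) h0.ne',
    Real.log_div h0.ne' (Real.exp_pos _).ne', Real.log_exp]
  ring

lemma logGamma_shift {x : ℝ} (hx : 0 < x) (n : ℕ) :
    Real.log (Real.Gamma (x + n)) =
      Real.log (Real.Gamma x) + ∑ m ∈ Finset.range n, Real.log (x + m) := by
  induction n with
  | zero => simp
  | succ n ih =>
    rw [Finset.sum_range_succ, ← add_assoc, ← ih, ← logGamma_succ (by positivity)]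
    push_cast; ring_nf

lemma D_tendsto {x : ℝ} (hx : 0 < x) : Tendsto (fun n : ℕ => D (x + n)) atTop (nhds 0) := by
  rw [← tendsto_add_atTop_iff_nat 1]
  have h1 := Real.BohrMollerup.tendsto_log_gamma hx
  have h2 := log_fact_tendsto
  have hb : Tendsto (fun n : ℕ => (fun n : ℕ => (x + 1) * (x + 1 / 2) + del (x + 1) n / n
      - (x + 1) ^ 2 / 2 + (x + 1 / 2) * (- (x + 1) ^ 2 / (2 * n) + del (x + 1) n / n ^ 2)
      + n / (12 * (x + (n + 1)))) n / (n : ℝ)) atTop (nhds 0) := by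
    apply tendsto_bdd_div (C := (x + 1) * (x + 1 / 2) + (x + 1) ^ 3
      + (x + 1) ^ 2 / 2 + (x + 1 / 2) * ((x + 1) ^ 2 / 2 + (x + 1) ^ 3) + 1)
    filter_upwards [eventually_ge_atTop 1] with n h0
    have h0 : (1 : ℝ) ≤ n := by exact_mod_cast h0
    have hd := abs_del_le (a := x + 1) (x := n) (by linarith) (by linarith)
    have a1 : |del (x + 1) n / n| ≤ (x + 1) ^ 3 := by
      rw [abs_div, abs_of_pos (by linarith : (0 : ℝ) < n)]
      exact (div_le_self (abs_nonneg _) h0).trans hd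
    have a2 : |del (x + 1) n / n ^ 2| ≤ (x + 1) ^ 3 := by
      rw [abs_div, abs_of_pos (by positivity : (0 : ℝ) < n ^ 2)]
      exact (div_le_self (abs_nonneg _) (by nlinarith)).trans hd
    have a3 : |- (x + 1) ^ 2 / (2 * n)| ≤ (x + 1) ^ 2 / 2 := by
      rw [neg_div, abs_neg, abs_of_nonneg (by positivity)]
      gcongr; linarith
    have a4 : |(n : ℝ) / (12 * (x + (n + 1)))| ≤ 1 := by
      rw [abs_of_nonneg (by positivity), div_le_one (by positivity)]
      linarith
    have a5 : |(x + 1 / 2) * (- (x + 1) ^ 2 / (2 * n) + del (x + 1) n / n ^ 2)| ≤ 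
        (x + 1 / 2) * ((x + 1) ^ 2 / 2 + (x + 1) ^ 3) := by
      rw [abs_mul, abs_of_pos (by positivity : 0 < x + 1 / 2)]
      gcongr
      exact (abs_add_le _ _).trans (by linarith)
    have a6 : 0 ≤ (x + 1) * (x + 1 / 2) := by positivity
    have a7 : 0 ≤ (x + 1) ^ 2 / 2 := by positivity
    rw [abs_le] at *
    constructor <;> linarith
  have := ((h1.const_sub (Real.log (Real.Gamma x))).add h2).sub hb
  simp only [sub_self, add_zero] at this
  refine this.congr' ?_
  filter_upwards [eventually_gt_atTop 0] with n h0
  have h0 : (0 : ℝ) < n := by exact_mod_cast h0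
  unfold D R Real.BohrMollerup.logGammaSeq
  rw [logGamma_shift hx]
  have e : x + ((n + 1 : ℕ) : ℝ) = n + (x + 1) := by push_cast; ring
  rw [e, log_add_eq (x + 1) h0]
  have : x + ((n : ℝ) + 1) = n + (x + 1) := by ring
  rw [this]
  have : (n : ℝ) + (x + 1) ≠ 0 := by positivity
  field_simp
  ring

lemma abs_D_le {x : ℝ} (hx : 1 ≤ x) : |D x| ≤ 2 / x ^ 2 := by
  have h := ((D_tendsto (by linarith : 0 < x)).const_sub (D x)).abs
  rw [sub_zero] at h
  refine le_of_tendsto h (Eventually.of_forall fun n => (D_sub_le hx n).trans ?_)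
  have : 0 ≤ 2 / (x + n) ^ 2 := by positivity
  linarith

end X2

namespace X2

/-- Euler-Maclaurin main term -/
def P (x : ℝ) (s : ℂ) : ℂ :=
  (x : ℂ) ^ (1 - s) / (s - 1) + (x : ℂ) ^ (-s) / 2 + s * (x : ℂ) ^ (-s - 1) / 12

def fE (x : ℝ) (s : ℂ) : ℂ := (x : ℂ) ^ (-s) - P x s + P (x + 1) s

def Uset : Set ℂ := {s | -(3 / 2) < s.re} ∩ {s | s.re - s.im < 0} ∩ Metric.ball 0 10

lemma Uset_open : IsOpen Uset := by
  refine ((isOpen_lt continuous_const Complex.continuous_re).inter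
    (isOpen_lt (by fun_prop) continuous_const)).inter Metric.isOpen_ball

lemma Uset_convex : Convex ℝ Uset := by
  refine (Convex.inter ?_ ?_).inter (convex_ball 0 10)
  · exact convex_halfSpace_re_gt _
  · exact convex_halfSpace_lt (f := fun s : ℂ => s.re - s.im)
      ⟨fun a b => by simp; ring, fun a b => by simp; ring⟩ 0

lemma neg_one_mem : (-1 : ℂ) ∈ Uset := by
  refine ⟨⟨?_, ?_⟩, ?_⟩ <;> (simp; try norm_num)

lemma base_mem : (⟨2, 3⟩ : ℂ) ∈ Uset := by
  refine ⟨⟨?_, ?_⟩, ?_⟩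
  · simp; norm_num
  · simp; norm_num
  · rw [mem_ball_zero_iff]
    refine (Complex.norm_le_abs_re_add_abs_im _).trans_lt ?_
    norm_num

lemma ne_one_of_mem {s : ℂ} (hs : s ∈ Uset) : s ≠ 1 := by
  rintro rfl
  have := hs.1.2
  simp at this
  linarith

lemma ne_zero_of_mem {s : ℂ} (hs : s ∈ Uset) : s ≠ 0 := by
  rintro rfl
  have := hs.1.2
  simp at this

lemma hasDeriv_pow (x : ℝ) (hx : 0 < x) (c : ℂ) {t : ℝ} (ht : 0 ≤ t) :
    HasDerivAt (fun t : ℝ => ((x + t : ℝ) : ℂ) ^ c) (c * ((x + t : ℝ) : ℂ) ^ (c - 1)) t := by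
  have h1 : HasDerivAt (fun t : ℝ => ((x + t : ℝ) : ℂ)) 1 t :=
    ((hasDerivAt_id t).const_add x).ofReal_comp
  have h0 : ((x + t : ℝ) : ℂ) ∈ Complex.slitPlane := by
    rw [Complex.ofReal_mem_slitPlane]; positivity
  have h2 := (hasDerivAt_id (((x + t : ℝ) : ℂ))).cpow_const (c := c) h0
  have h3 := HasDerivAt.comp t h2 h1
  simpa [Function.comp_def] using h3

lemma fE_bound {x : ℝ} (hx : 1 ≤ x) {s : ℂ} (hs : s ∈ Uset) :
    ‖fE x s‖ ≤ 1320 * x ^ (-(3 / 2) : ℝ) := by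
  have hx0 : 0 < x := by linarith
  have hs1 : s - 1 ≠ 0 := sub_ne_zero.2 (ne_one_of_mem hs)
  have hs1' : 1 - s ≠ 0 := by rw [← neg_sub]; exact neg_ne_zero.2 hs1
  let F : ℝ → ℂ := fun t =>
    ((t * (t - 1 / 2) * (t - 1) / 6 : ℝ) : ℂ) * (s * (s + 1) * ((x + t : ℝ) : ℂ) ^ (-s - 2))
    - (((3 * t ^ 2 - 3 * t + 1 / 2) / 6 : ℝ) : ℂ) * (-s * ((x + t : ℝ) : ℂ) ^ (-s - 1))
    + ((t - 1 / 2 : ℝ) : ℂ) * ((x + t : ℝ) : ℂ) ^ (-s)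
    - ((x + t : ℝ) : ℂ) ^ (1 - s) / (1 - s)
  let F' : ℝ → ℂ := fun t =>
    ((t * (t - 1 / 2) * (t - 1) / 6 : ℝ) : ℂ) *
      (s * (s + 1) * ((-s - 2) * ((x + t : ℝ) : ℂ) ^ (-s - 3)))
  have key : fE x s = F 1 - F 0 := by
    simp only [F, fE, P]
    push_cast
    have : x + 0 = (x : ℂ) := by ring
    rw [this]
    have e2 : (1 - s)⁻¹ = -(s - 1)⁻¹ := by rw [← inv_neg, neg_sub]
    simp only [div_eq_mul_inv, e2]
    ring
  rw [key]
  apply norm_image_sub_le_of_norm_deriv_le_segment_01' (f' := F')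
  · intro t ht
    have p3 : HasDerivAt (fun t : ℝ => ((t * (t - 1 / 2) * (t - 1) / 6 : ℝ) : ℂ))
        (((3 * t ^ 2 - 3 * t + 1 / 2) / 6 : ℝ) : ℂ) t := by
      apply HasDerivAt.ofReal_comp
      have := (((hasDerivAt_id t).mul ((hasDerivAt_id t).sub_const (1 / 2))).mul
        ((hasDerivAt_id t).sub_const 1)).div_const 6
      refine this.congr_deriv ?_
      simp; ring
    have p2 : HasDerivAt (fun t : ℝ => (((3 * t ^ 2 - 3 * t + 1 / 2) / 6 : ℝ) : ℂ))
        ((t - 1 / 2 : ℝ) : ℂ) t := by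
      apply HasDerivAt.ofReal_comp
      have := (((((hasDerivAt_id t).pow 2).const_mul 3).sub ((hasDerivAt_id t).const_mul 3)).add_const
        (1 / 2)).div_const 6
      refine this.congr_deriv ?_
      simp; ring
    have p1 : HasDerivAt (fun t : ℝ => ((t - 1 / 2 : ℝ) : ℂ)) ((1 : ℝ) : ℂ) t := by
      apply HasDerivAt.ofReal_comp
      exact (hasDerivAt_id t).sub_const _
    have g2 := (hasDeriv_pow x hx0 (-s - 2) ht.1).const_mul (s * (s + 1))
    have g1 := (hasDeriv_pow x hx0 (-s - 1) ht.1).const_mul (-s)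
    have g0 := hasDeriv_pow x hx0 (-s) ht.1
    have gm := (hasDeriv_pow x hx0 (1 - s) ht.1).div_const (1 - s)
    have := (((p3.mul g2).sub (p2.mul g1)).add (p1.mul g0)).sub gm
    refine HasDerivAt.hasDerivWithinAt (this.congr_deriv ?_)
    simp only [F']
    have e1 : -s - 2 - 1 = -s - 3 := by ring
    have e2 : -s - 1 - 1 = -s - 2 := by ring
    have e3 : 1 - s - 1 = -s := by ring
    rw [e1, e2, e3, mul_div_cancel_left₀ _ hs1']
    push_cast
    ring
  · intro t ht
    have ht0 := ht.1
    have ht1 := ht.2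
    simp only [F']
    have hn : ‖s‖ ≤ 10 := by
      have := hs.2; rw [mem_ball_zero_iff] at this; exact this.le
    have n1 : ‖s + 1‖ ≤ 11 := (norm_add_le _ _).trans (by simp; linarith)
    have n2 : ‖-s - 2‖ ≤ 12 := (norm_sub_le _ _).trans (by simp; linarith)
    have n3 : ‖((x + t : ℝ) : ℂ) ^ (-s - 3)‖ ≤ x ^ (-(3 / 2) : ℝ) := by
      rw [Complex.norm_cpow_eq_rpow_re_of_pos (by linarith)]
      have hre : -(3 / 2) < s.re := hs.1.1
      have : (-s - 3).re ≤ -(3 / 2) := by simp; linarith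
      calc (x + t) ^ (-s - 3).re ≤ (x + t) ^ (-(3 / 2) : ℝ) :=
            Real.rpow_le_rpow_of_exponent_le (by linarith) this
        _ ≤ x ^ (-(3 / 2) : ℝ) :=
            Real.rpow_le_rpow_of_nonpos hx0 (by linarith) (by norm_num)
    have n4 : ‖((t * (t - 1 / 2) * (t - 1) / 6 : ℝ) : ℂ)‖ ≤ 1 := by
      rw [Complex.norm_real, Real.norm_eq_abs, abs_div, abs_mul, abs_mul, abs_of_nonneg ht0]
      have b1 : |t - 1 / 2| ≤ 1 := by rw [abs_le]; constructor <;> linarith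
      have b2 : |t - 1| ≤ 1 := by rw [abs_le]; constructor <;> linarith
      have : t * |t - 1 / 2| * |t - 1| ≤ 1 * 1 * 1 := by gcongr
      rw [abs_of_pos (by norm_num : (0 : ℝ) < 6)]
      linarith
    rw [norm_mul, norm_mul, norm_mul, norm_mul]
    calc _ ≤ 1 * (10 * 11 * (12 * x ^ (-(3 / 2) : ℝ))) := by gcongr
      _ = _ := by ring

lemma P_diff {x : ℝ} (hx : 0 < x) : DifferentiableOn ℂ (P x) Uset := by
  intro s hs
  have hs1 : s - 1 ≠ 0 := sub_ne_zero.2 (ne_one_of_mem hs)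
  have hxc : (x : ℂ) ≠ 0 := by exact_mod_cast hx.ne'
  apply DifferentiableAt.differentiableWithinAt
  unfold P
  have hden : DifferentiableAt ℂ (fun s : ℂ => s - 1) s := by fun_prop
  refine ((DifferentiableAt.fun_div ?_ hden hs1).fun_add ?_).fun_add ?_
  · exact DifferentiableAt.const_cpow (by fun_prop) (Or.inl hxc)
  · exact (DifferentiableAt.const_cpow (by fun_prop) (Or.inl hxc)).div_const _
  · exact (DifferentiableAt.mul (by fun_prop)
      (DifferentiableAt.const_cpow (by fun_prop) (Or.inl hxc))).div_const _

lemma fE_diff {x : ℝ} (hx : 0 < x) : DifferentiableOn ℂ (fE x) Uset := by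
  have hxc : (x : ℂ) ≠ 0 := by exact_mod_cast hx.ne'
  refine (DifferentiableOn.sub ?_ (P_diff hx)).add (P_diff (by linarith))
  intro s hs
  exact (DifferentiableAt.const_cpow (by fun_prop) (Or.inl hxc)).differentiableWithinAt

/-- the Euler-Maclaurin antiderivative derivative at `-1` -/
def Q (x : ℝ) : ℝ :=
  x ^ 2 / 2 * Real.log x - x ^ 2 / 4 - x / 2 * Real.log x + Real.log x / 12 + 1 / 12

lemma pow_deriv {x : ℝ} (hx : 0 ≤ x) :
    HasDerivAt (fun s : ℂ => (x : ℂ) ^ (-s)) ((-(x * Real.log x) : ℝ) : ℂ) (-1) := by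
  have h := (hasDerivAt_neg (-1 : ℂ)).const_cpow (c := (x : ℂ)) (Or.inr (by simp))
  refine h.congr_deriv ?_
  rw [← Complex.ofReal_log hx]
  simp

lemma P_deriv {x : ℝ} (hx : 0 < x) : HasDerivAt (P x) ((Q x : ℝ) : ℂ) (-1) := by
  have hxc : (x : ℂ) ≠ 0 := by exact_mod_cast hx.ne'
  have h1 : HasDerivAt (fun s : ℂ => 1 - s) (-1) (-1) := by
    simpa using (hasDerivAt_id (-1 : ℂ)).const_sub 1
  have h2 : HasDerivAt (fun s : ℂ => s - 1) 1 (-1) := by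
    simpa using (hasDerivAt_id (-1 : ℂ)).sub_const 1
  have h3 : HasDerivAt (fun s : ℂ => -s - 1) (-1) (-1) := by
    simpa using (hasDerivAt_neg (-1 : ℂ)).sub_const 1
  have a := (h1.const_cpow (c := (x : ℂ)) (Or.inl hxc)).div h2 (by norm_num)
  have b := (pow_deriv hx.le).div_const 2
  have c := ((hasDerivAt_id (-1 : ℂ)).mul (h3.const_cpow (c := (x : ℂ)) (Or.inl hxc))).div_const 12
  refine ((a.add b).add c).congr_deriv ?_
  rw [← Complex.ofReal_log hx.le]
  unfold Q
  have e : (1 : ℂ) - (-1) = ((2 : ℕ) : ℂ) := by norm_num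
  have e' : -(-1 : ℂ) - 1 = 0 := by norm_num
  rw [e, e', Complex.cpow_natCast, Complex.cpow_zero]
  push_cast
  simp only [id]
  ring

lemma P_tendsto (f : ℝ) (hf : 0 ≤ f) {s : ℂ} (hs : 1 < s.re) :
    Tendsto (fun n : ℕ => P (n + f) s) atTop (nhds 0) := by
  have ht : Tendsto (fun n : ℕ => (n : ℝ) + f) atTop atTop :=
    tendsto_atTop_add_const_right _ _ tendsto_natCast_atTop_atTop
  have key : ∀ c : ℂ, c.re < 0 → Tendsto (fun n : ℕ => (((n : ℝ) + f : ℝ) : ℂ) ^ c) atTop (nhds 0) := by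
    intro c hc
    rw [tendsto_zero_iff_norm_tendsto_zero]
    have := (tendsto_rpow_neg_atTop (y := -c.re) (by linarith)).comp ht
    refine this.congr' ?_
    filter_upwards [eventually_gt_atTop 0] with n h0
    have h0 : (0 : ℝ) < n := by exact_mod_cast h0
    simp only [Function.comp]
    rw [Complex.norm_cpow_eq_rpow_re_of_pos (by linarith), neg_neg]
  have a := (key (1 - s) (by simp; linarith)).div_const (s - 1)
  have b := (key (-s) (by simp; linarith)).div_const 2
  have c := ((key (-s - 1) (by simp; linarith)).const_mul s).div_const 12
  have := (a.add b).add c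
  simpa [P] using this

lemma summable_bd :
    Summable (fun n : ℕ => 1320 * ((n : ℝ) + 1) ^ (-(3 / 2) : ℝ)) := by
  apply Summable.mul_left
  have := (summable_nat_add_iff 1).2 (Real.summable_nat_rpow.2 (by norm_num : (-(3 / 2) : ℝ) < -1))
  simpa using this

lemma fE_bound' (f : ℝ) (hf : 0 ≤ f) (n : ℕ) {s : ℂ} (hs : s ∈ Uset) :
    ‖fE (n + 1 + f) s‖ ≤ 1320 * ((n : ℝ) + 1) ^ (-(3 / 2) : ℝ) := by
  have hn : (0 : ℝ) ≤ n := n.cast_nonneg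
  refine (fE_bound (by linarith) hs).trans ?_
  gcongr 1320 * ?_
  exact Real.rpow_le_rpow_of_nonpos (by linarith) (by linarith) (by norm_num)

lemma hz_eq_aux {f : ℝ} (hf : f ∈ Set.Icc (0 : ℝ) 1) {s : ℂ} (hsU : s ∈ Uset) (hs : 1 < s.re) :
    HurwitzZeta.hurwitzZeta (f : UnitAddCircle) s - (f : ℂ) ^ (-s)
      = P (1 + f) s + ∑' n : ℕ, fE (n + 1 + f) s := by
  have h := (HurwitzZeta.hasSum_hurwitzZeta_of_one_lt_re hf hs).tendsto_sum_nat
  rw [← tendsto_add_atTop_iff_nat 1] at h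
  have hS : Summable (fun n : ℕ => fE (n + 1 + f) s) :=
    Summable.of_norm_bounded summable_bd (fun n => fE_bound' f hf.1 n hsU)
  have h2 := hS.hasSum.tendsto_sum_nat
  have h3 := P_tendsto (1 + f) (by linarith [hf.1]) hs
  have h4 := ((h2.const_add (P (1 + f) s)).sub h3).add_const ((f : ℂ) ^ (-s))
  have key : ∀ N : ℕ, ∑ i ∈ Finset.range (N + 1), 1 / ((i : ℂ) + f) ^ s =
      P (1 + f) s + ∑ i ∈ Finset.range N, fE (i + 1 + f) s - P (N + (1 + f)) s + (f : ℂ) ^ (-s) := by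
    intro N
    induction N with
    | zero => simp [Complex.cpow_neg]
    | succ N ih =>
      rw [Finset.sum_range_succ, ih, Finset.sum_range_succ]
      unfold fE
      push_cast
      have e1 : (N : ℝ) + 1 + (1 + f) = N + 1 + f + 1 := by ring
      have e2 : (N : ℝ) + (1 + f) = N + 1 + f := by ring
      rw [e1, e2, Complex.cpow_neg ((N : ℂ) + 1 + f) s]
      ring
  have h5 := tendsto_nhds_unique (h.congr key) h4
  rw [h5]; ring

lemma hz_eqOn {f : ℝ} (hf : f ∈ Set.Icc (0 : ℝ) 1) :
    Set.EqOn (fun s => HurwitzZeta.hurwitzZeta (f : UnitAddCircle) s - (f : ℂ) ^ (-s))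
      (fun s => P (1 + f) s + ∑' n : ℕ, fE (n + 1 + f) s) Uset := by
  apply AnalyticOnNhd.eqOn_of_preconnected_of_eventuallyEq (𝕜 := ℂ) (z₀ := ⟨2, 3⟩) _ _
    Uset_convex.isPreconnected base_mem
  · have : {s : ℂ | 1 < s.re} ∈ nhds (⟨2, 3⟩ : ℂ) :=
      (isOpen_lt continuous_const Complex.continuous_re).mem_nhds (by simp)
    filter_upwards [this, Uset_open.mem_nhds base_mem] with s h1 h2
    exact hz_eq_aux hf h2 h1
  · apply DifferentiableOn.analyticOnNhd _ Uset_open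
    intro s hs
    refine ((HurwitzZeta.differentiableAt_hurwitzZeta _ (ne_one_of_mem hs)).sub
      ?_).differentiableWithinAt
    exact DifferentiableAt.const_cpow (by fun_prop) (Or.inr (neg_ne_zero.2 (ne_zero_of_mem hs)))
  · apply DifferentiableOn.analyticOnNhd _ Uset_open
    refine (P_diff (by linarith [hf.1])).add ?_
    exact Complex.differentiableOn_tsum_of_summable_norm summable_bd
      (fun n => fE_diff (by linarith [hf.1, (n.cast_nonneg : (0 : ℝ) ≤ n)])) Uset_open
      (fun n s hs => fE_bound' f hf.1 n hs)

lemma hz_deriv {f : ℝ} (hf : f ∈ Set.Icc (0 : ℝ) 1) :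
    Tendsto (fun N : ℕ => ((-∑ n ∈ Finset.range N, ((n : ℝ) + f) * Real.log (n + f) + Q (N + f) : ℝ) : ℂ))
      atTop (nhds (deriv (HurwitzZeta.hurwitzZeta (f : UnitAddCircle)) (-1))) := by
  rw [← tendsto_add_atTop_iff_nat 1]
  have hd : deriv (fun s => HurwitzZeta.hurwitzZeta (f : UnitAddCircle) s - (f : ℂ) ^ (-s)) (-1)
      = deriv (fun s => P (1 + f) s + ∑' n : ℕ, fE (n + 1 + f) s) (-1) :=
    Filter.EventuallyEq.deriv_eq
      (Filter.eventuallyEq_of_mem (Uset_open.mem_nhds neg_one_mem) (hz_eqOn hf))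
  have hF : ∀ n : ℕ, DifferentiableOn ℂ (fE (n + 1 + f)) Uset :=
    fun n => fE_diff (by linarith [hf.1, (n.cast_nonneg : (0 : ℝ) ≤ n)])
  have hdiff := Complex.differentiableOn_tsum_of_summable_norm summable_bd
      hF Uset_open (fun n s hs => fE_bound' f hf.1 n hs)
  have hsum := (Complex.hasSum_deriv_of_summable_norm summable_bd
      hF Uset_open (fun n s hs => fE_bound' f hf.1 n hs) neg_one_mem).tendsto_sum_nat
  have hPd : HasDerivAt (P (1 + f)) _ _ := P_deriv (by linarith [hf.1])
  rw [deriv_fun_sub (HurwitzZeta.differentiableAt_hurwitzZeta _ (by norm_num))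
    (pow_deriv hf.1).differentiableAt, (pow_deriv hf.1).deriv,
    deriv_fun_add hPd.differentiableAt (hdiff.differentiableAt (Uset_open.mem_nhds neg_one_mem)),
    hPd.deriv, sub_eq_iff_eq_add] at hd
  rw [hd]
  refine ((hsum.const_add _).add_const _).congr ?_
  intro N
  have hfd : ∀ n : ℕ, deriv (fE (n + 1 + f)) (-1) =
      ((-((n + 1 + f) * Real.log (n + 1 + f)) - Q (n + 1 + f) + Q (n + 1 + f + 1) : ℝ) : ℂ) := by
    intro n
    have hp : 0 < (n : ℝ) + 1 + f := by linarith [hf.1, (n.cast_nonneg : (0 : ℝ) ≤ n)]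
    have := ((pow_deriv hp.le).sub (P_deriv hp)).add (P_deriv (by linarith : 0 < (n : ℝ) + 1 + f + 1))
    have h2 : HasDerivAt (fE (n + 1 + f)) _ (-1) := this
    rw [h2.deriv]
    push_cast
    ring
  simp_rw [hfd]
  norm_cast
  induction N with
  | zero => simp; ring_nf
  | succ N ih =>
    rw [Finset.sum_range_succ, Finset.sum_range_succ]
    have e1 : (((N + 1 + 1 : ℕ) : ℝ) + f) = N + 1 + f + 1 := by push_cast; ring
    have e2 : (((N + 1 : ℕ) : ℝ) + f) = N + 1 + f := by push_cast; ring
    rw [e1, e2]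
    rw [e2] at ih
    linear_combination ih

lemma hzR_deriv {u : ℝ} (hu : 0 ≤ u) :
    Tendsto (fun N : ℕ => ((-∑ n ∈ Finset.range N, ((n : ℝ) + u) * Real.log (n + u) + Q (N + u) : ℝ) : ℂ))
      atTop (nhds (deriv (hurwitzZetaR u) (-1))) := by
  obtain ⟨f, hfd⟩ : ∃ f, f = Int.fract u := ⟨_, rfl⟩
  obtain ⟨k, hk⟩ : ∃ k, k = ⌊u⌋₊ := ⟨_, rfl⟩
  have hf : f ∈ Set.Icc (0 : ℝ) 1 := by
    rw [hfd]; exact ⟨Int.fract_nonneg u, (Int.fract_lt_one u).le⟩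
  have huf : u = k + f := by
    rw [hfd, hk, natCast_floor_eq_intCast_floor hu, Int.floor_add_fract]
  have hd : HasDerivAt (hurwitzZetaR u) (deriv (HurwitzZeta.hurwitzZeta (f : UnitAddCircle)) (-1) -
      ∑ n ∈ Finset.range k, ((-((f + n) * Real.log (f + n)) : ℝ) : ℂ)) (-1) := by
    unfold hurwitzZetaR
    rw [← hfd, ← hk]
    refine (HurwitzZeta.differentiableAt_hurwitzZeta _ (by norm_num)).hasDerivAt.sub ?_
    apply HasDerivAt.fun_sum
    intro n _
    have := pow_deriv (x := f + n) (by linarith [hf.1, (n.cast_nonneg : (0 : ℝ) ≤ n)])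
    push_cast at this ⊢
    exact this
  rw [hd.deriv]
  have h := hz_deriv hf
  rw [← tendsto_add_atTop_iff_nat k] at h
  refine (h.sub_const _).congr ?_
  intro N
  norm_cast
  rw [add_comm N k, Finset.sum_range_add, Finset.sum_neg_distrib, huf]
  have e : ∀ n : ℕ, ((k + n : ℕ) : ℝ) + f = n + (k + f) := fun n => by push_cast; ring
  simp only [e]
  have e2 : ∀ n : ℕ, (n : ℝ) + f = f + n := fun n => by ring
  simp only [e2]
  ring

lemma real_of_tendsto {g : ℕ → ℝ} {z : ℂ} (h : Tendsto (fun n => (g n : ℂ)) atTop (nhds z)) :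
    Tendsto g atTop (nhds z.re) ∧ (z.re : ℂ) = z := by
  have h1 := (Complex.continuous_re.tendsto z).comp h
  have h2 : Tendsto g atTop (nhds z.re) := by simpa [Function.comp_def] using h1
  refine ⟨h2, ?_⟩
  exact tendsto_nhds_unique ((Complex.continuous_ofReal.tendsto z.re).comp h2) h

end X2

namespace X2

def T (ν : ℝ) (n : ℕ) : ℝ :=
  Real.log (Real.Gamma (1 + ν + n)) +
        ((n : ℝ) + (1 + ν) / 2) * (1 - Real.log ((n : ℝ) + (1 + ν) / 2)) +
        (1 - 3 * ν ^ 2) / 24 * Real.log (1 + 1 / ((n : ℝ) + 1)) -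
        ν / 2 * Real.log ((n : ℝ) + (1 + ν) / 2) - Real.log (2 * Real.pi) / 2

def Bt (x : ℝ) (k : ℕ) : ℝ :=
  ((k : ℝ) + 1) * Real.log (1 + x / ((k : ℝ) + 1)) - x + x ^ 2 / (2 * ((k : ℝ) + 1))

lemma log_one_add_div {x y : ℝ} (hx : 0 < x) (hy : 0 ≤ y) :
    Real.log (1 + y / x) = Real.log (x + y) - Real.log x := by
  rw [← Real.log_div (by positivity) (by positivity)]; congr 1; field_simp

lemma Bt_summable {x : ℝ} (hx : 0 ≤ x) : Summable (Bt x) := by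
  have h : Summable (fun k : ℕ => x ^ 3 * (1 / ((k : ℝ) + 1) ^ 2)) := by
    apply Summable.mul_left
    have := (summable_nat_add_iff 1).2 (Real.summable_one_div_nat_pow.2 (by norm_num : 1 < 2))
    simpa using this
  refine Summable.of_norm_bounded h fun k => ?_
  have hk : (0 : ℝ) < (k : ℝ) + 1 := by positivity
  have e : Bt x k = del x (k + 1) / ((k : ℝ) + 1) ^ 2 := by
    unfold Bt
    rw [log_one_add_div hk hx, log_add_eq x hk]
    field_simp
    ring
  rw [e, Real.norm_eq_abs, abs_div, abs_of_pos (by positivity : 0 < ((k : ℝ) + 1) ^ 2), mul_one_div]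
  gcongr
  exact abs_del_le hx hk

lemma inv_le_one' {n : ℕ} (hn : 1 ≤ n) : (1 : ℝ) / n ∈ Set.Icc (0 : ℝ) 1 := by
  have h0 : (1 : ℝ) ≤ n := by exact_mod_cast hn
  exact ⟨by positivity, by rw [div_le_one (by linarith)]; exact h0⟩

lemma T_summable {ν : ℝ} (hν : 0 ≤ ν) : Summable (T ν) := by
  obtain ⟨a, ha⟩ : ∃ a, a = 1 + ν := ⟨_, rfl⟩
  obtain ⟨m, hm⟩ : ∃ m, m = (1 + ν) / 2 := ⟨_, rfl⟩
  have ha0 : 0 < a := by linarith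
  have hm0 : 0 < m := by linarith
  let g : ℝ × ℝ × ℝ × ℝ × ℝ × ℝ → ℝ := fun p =>
    p.2.1 + (a - 1 / 2) * (-a ^ 2 / 2 + p.2.1 * p.1) - a * p.2.2.2.2.2 / 12
    - (p.2.2.1 + m * (-m ^ 2 / 2 + p.2.2.1 * p.1))
    + (1 - 3 * ν ^ 2) / 24 * (-3 / 2 + (p.2.2.2.2.1 - p.2.2.2.1) * p.1)
    - ν / 2 * (-m ^ 2 / 2 + p.2.2.1 * p.1)
  have hg : Continuous g := by fun_prop
  let K : Set (ℝ × ℝ × ℝ × ℝ × ℝ × ℝ) :=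
    Set.Icc (0 : ℝ) 1 ×ˢ Set.Icc (-a ^ 3) (a ^ 3) ×ˢ Set.Icc (-m ^ 3) (m ^ 3) ×ˢ
      Set.Icc (-1 ^ 3) (1 ^ 3) ×ˢ Set.Icc (-2 ^ 3) (2 ^ 3) ×ˢ Set.Icc (0 : ℝ) 1
  have hK : IsCompact K := isCompact_Icc.prod (isCompact_Icc.prod (isCompact_Icc.prod
    (isCompact_Icc.prod (isCompact_Icc.prod isCompact_Icc))))
  obtain ⟨C, hC⟩ := hK.exists_bound_of_continuousOn hg.continuousOn
  have h : Summable (fun n : ℕ => (C + 2) * (1 / (n : ℝ) ^ 2)) :=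
    (Real.summable_one_div_nat_pow.2 (by norm_num : 1 < 2)).mul_left _
  refine Summable.of_norm_bounded_eventually_nat h ?_
  filter_upwards [eventually_ge_atTop 1] with n hn1
  have hn : (0 : ℝ) < n := by exact_mod_cast hn1
  let p : ℝ × ℝ × ℝ × ℝ × ℝ × ℝ := (1 / n, del a n, del m n, del 1 n, del 2 n, n / (n + a))
  have hp : p ∈ K := by
    have d1 := abs_le.1 (abs_del_le ha0.le hn)
    have d2 := abs_le.1 (abs_del_le hm0.le hn)
    have d3 := abs_le.1 (abs_del_le (zero_le_one) hn)
    have d4 := abs_le.1 (abs_del_le (zero_le_two) hn)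
    refine ⟨inv_le_one' hn1, by simpa using d1, by simpa using d2, by simpa using d3,
      by simpa using d4, ?_, ?_⟩
    · simp only [p]; positivity
    · simp only [p]; rw [div_le_one (by positivity)]; linarith
  have hgp := hC p hp
  have e : T ν n = D (n + a) + g p / n ^ 2 := by
    have e1 : 1 + ν + (n : ℝ) = n + a := by rw [ha]; ring
    have e2 : Real.log (Real.Gamma (n + a)) = D (n + a) + R (n + a) := by unfold D; ring
    have e3 : Real.log (1 + 1 / ((n : ℝ) + 1)) = Real.log (n + 2) - Real.log (n + 1) := by
      rw [log_one_add_div (by positivity) zero_le_one]; ring_nf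
    unfold T R at *
    rw [e1, e2, e3, ← hm, log_add_eq a hn, log_add_eq m hn, log_add_eq 1 hn, log_add_eq 2 hn]
    simp only [g, p]
    have e4 : 1 / (12 * ((n : ℝ) + a)) = 1 / (12 * n) - a * (n / (n + a)) / 12 / n ^ 2 := by
      have : (n : ℝ) + a ≠ 0 := by positivity
      field_simp; ring
    rw [e4]
    have hν' : ν = 2 * m - 1 := by linarith
    have ha' : a = 2 * m := by linarith
    generalize (n : ℝ) / (n + a) = r
    generalize del a n = d1
    generalize del m n = d2
    generalize del 1 n = d3
    generalize del 2 n = d4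
    generalize D (n + a) = d5
    rw [ha', hν']
    field_simp
    ring
  rw [e]
  refine (norm_add_le _ _).trans ?_
  have hD := abs_D_le (x := n + a) (by linarith)
  have hD2 : 2 / ((n : ℝ) + a) ^ 2 ≤ 2 / n ^ 2 := by gcongr; linarith
  rw [norm_div, Real.norm_eq_abs (D _), Real.norm_of_nonneg (by positivity : (0 : ℝ) ≤ (n : ℝ) ^ 2)]
  have : ‖g p‖ / (n : ℝ) ^ 2 ≤ C / n ^ 2 := by gcongr
  calc _ ≤ 2 / (n : ℝ) ^ 2 + C / n ^ 2 := by linarith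
    _ = _ := by ring

def E (ν : ℝ) (x : ℝ) : ℝ :=
  x * R (x + (1 + ν)) - ν * x + ν ^ 2 / 2 * Real.log x - Q x - x * Real.log x + x * (x - 1) / 2
    + (1 + ν) / 2 * x - Q (x + (1 + ν) / 2) + (1 - 3 * ν ^ 2) / 24 * Real.log (x + 1)
    - ν / 2 * R (x + (1 + ν) / 2) - x * (Real.log (2 * Real.pi) / 2)

lemma E_tendsto {ν : ℝ} (hν : 0 ≤ ν) : Tendsto (fun n : ℕ => E ν n) atTop
    (nhds (1 / 24 + ν / 2 + 3 * ν ^ 2 / 8 - ν / 4 * Real.log (2 * Real.pi))) := by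
  obtain ⟨a, ha⟩ : ∃ a, a = 1 + ν := ⟨_, rfl⟩
  obtain ⟨m, hm⟩ : ∃ m, m = (1 + ν) / 2 := ⟨_, rfl⟩
  have ha0 : 0 < a := by linarith
  have hm0 : 0 < m := by linarith
  let g : ℝ × ℝ × ℝ × ℝ × ℝ × ℝ → ℝ := fun p =>
    1 / 24 + ν / 2 + 3 * ν ^ 2 / 8 - ν / 4 * Real.log (2 * Real.pi) +
    p.2.1 + (a - 1 / 2) * (-a ^ 2 * p.1 / 2 + p.2.1 * p.1) - a * p.2.2.2.2.1 / 12
    - (p.2.2.1 / 2 + (m - 1 / 2) * (-m ^ 2 * p.1 / 2 + p.2.2.1 * p.1)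
      + (m ^ 2 / 2 - m / 2 + 1 / 12) * (m * p.1 - m ^ 2 * p.1 ^ 2 / 2 + p.2.2.1 * p.1 ^ 2))
    + (1 - 3 * ν ^ 2) / 24 * (p.1 - p.1 ^ 2 / 2 + p.2.2.2.1 * p.1 ^ 2)
    - ν / 2 * (-m ^ 2 * p.1 / 2 + p.2.2.1 * p.1
      + (m - 1 / 2) * (m * p.1 - m ^ 2 * p.1 ^ 2 / 2 + p.2.2.1 * p.1 ^ 2) + p.2.2.2.2.2 / 12)
  have hg : Continuous g := by fun_prop
  have hw : ∀ b : ℝ, Tendsto (fun n : ℕ => 1 / ((n : ℝ) + b)) atTop (nhds 0) := fun b =>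
    tendsto_const_nhds.div_atTop
      (tendsto_atTop_add_const_right _ _ tendsto_natCast_atTop_atTop)
  have hd : ∀ b : ℝ, 0 ≤ b → Tendsto (fun n : ℕ => del b n / (n : ℝ)) atTop (nhds 0) := fun b hb =>
    tendsto_bdd_div (C := b ^ 3) (by
      filter_upwards [eventually_gt_atTop 0] with n h0
      exact abs_del_le hb (by exact_mod_cast h0))
  have ht : Tendsto (fun n : ℕ => ((1 / (n : ℝ), del a n / n, del m n / n, del 1 n / n,
      1 / ((n : ℝ) + a), 1 / ((n : ℝ) + m)) : ℝ × ℝ × ℝ × ℝ × ℝ × ℝ)) atTop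
      (nhds (0, 0, 0, 0, 0, 0)) :=
    tendsto_one_div_atTop_nhds_zero_nat.prodMk_nhds ((hd a ha0.le).prodMk_nhds
      ((hd m hm0.le).prodMk_nhds ((hd 1 zero_le_one).prodMk_nhds ((hw a).prodMk_nhds (hw m)))))
  have h := (hg.tendsto _).comp ht
  have h0 : g (0, 0, 0, 0, 0, 0) =
      1 / 24 + ν / 2 + 3 * ν ^ 2 / 8 - ν / 4 * Real.log (2 * Real.pi) := by
    simp [g]
  rw [h0] at h
  refine h.congr' ?_
  filter_upwards [eventually_ge_atTop 1] with n hn1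
  have hn : (0 : ℝ) < n := by exact_mod_cast hn1
  simp only [Function.comp]
  unfold E R Q
  rw [← hm, ← ha, log_add_eq a hn, log_add_eq m hn, log_add_eq 1 hn]
  simp only [g]
  have hν' : ν = 2 * m - 1 := by linarith
  have ha' : a = 2 * m := by linarith
  have e4 : (n : ℝ) * (1 / (12 * ((n : ℝ) + a))) = 1 / 12 - a * (1 / (n + a)) / 12 := by
    have : (n : ℝ) + a ≠ 0 := by positivity
    field_simp; ring
  have e5 : 1 / (12 * ((n : ℝ) + m)) = 1 / (n + m) / 12 := by
    have : (n : ℝ) + m ≠ 0 := by positivity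
    field_simp
  rw [mul_add (n : ℝ) _ (1 / (12 * ((n : ℝ) + a))), e4, e5]
  generalize (1 : ℝ) / (n + a) = r
  generalize (1 : ℝ) / (n + m) = r'
  generalize del a n = d1
  generalize del m n = d2
  generalize del 1 n = d3
  generalize Real.log (2 * Real.pi) = l
  rw [ha', hν']
  field_simp
  ring

lemma sum_logGamma {ν : ℝ} (hν : 0 ≤ ν) (N : ℕ) :
    ∑ n ∈ Finset.range N, Real.log (Real.Gamma (1 + ν + n)) =
      N * Real.log (Real.Gamma (1 + ν + N)) -
        ∑ n ∈ Finset.range N, ((n : ℝ) + 1) * Real.log (n + 1 + ν) := by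
  induction N with
  | zero => simp
  | succ N ih =>
    rw [Finset.sum_range_succ, Finset.sum_range_succ, ih]
    have h : 1 + ν + ((N + 1 : ℕ) : ℝ) = (1 + ν + N) + 1 := by push_cast; ring
    rw [h, logGamma_succ (by positivity)]
    have h2 : (N : ℝ) + 1 + ν = 1 + ν + N := by ring
    rw [h2]
    push_cast
    ring

lemma sum_B {ν : ℝ} (hν : 0 ≤ ν) (N : ℕ) :
    ∑ n ∈ Finset.range N, ((n : ℝ) + 1) * Real.log (n + 1 + ν) =
      ∑ n ∈ Finset.range N, Bt ν n + ν * N - ν ^ 2 / 2 * (harmonic N : ℝ)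
        + ∑ n ∈ Finset.range N, ((n : ℝ) + ((0 : ℝ))) * Real.log (n + (0 : ℝ)) + N * Real.log N := by
  induction N with
  | zero => simp
  | succ N ih =>
    rw [Finset.sum_range_succ, Finset.sum_range_succ, Finset.sum_range_succ, ih, harmonic_succ]
    generalize ∑ n ∈ Finset.range N, Bt ν n = b
    unfold Bt
    have hk : (0 : ℝ) < (N : ℝ) + 1 := by positivity
    rw [log_one_add_div hk hν]
    push_cast
    simp only [add_zero]
    field_simp
    ring

lemma sum_T {ν : ℝ} (hν : 0 ≤ ν) (N : ℕ) :
    ∑ n ∈ Finset.range N, T ν n =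
      ∑ n ∈ Finset.range N, Real.log (Real.Gamma (1 + ν + n)) + N * ((N : ℝ) - 1) / 2 +
        (1 + ν) / 2 * N - ∑ n ∈ Finset.range N, ((n : ℝ) + (1 + ν) / 2) * Real.log (n + (1 + ν) / 2)
        + (1 - 3 * ν ^ 2) / 24 * Real.log (N + 1)
        - ν / 2 * (Real.log (Real.Gamma ((1 + ν) / 2 + N)) - Real.log (Real.Gamma ((1 + ν) / 2)))
        - N * (Real.log (2 * Real.pi) / 2) := by
  induction N with
  | zero => simp
  | succ N ih =>
    rw [Finset.sum_range_succ, Finset.sum_range_succ, Finset.sum_range_succ, ih]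
    have h : (1 + ν) / 2 + ((N + 1 : ℕ) : ℝ) = ((1 + ν) / 2 + N) + 1 := by push_cast; ring
    rw [h, logGamma_succ (by positivity)]
    unfold T
    rw [log_one_add_div (by positivity) zero_le_one, add_comm ((1 + ν) / 2) (N : ℝ)]
    push_cast
    ring

lemma M_tendsto {ν : ℝ} (hν : 0 ≤ ν) :
    Tendsto (fun N : ℕ => -∑ n ∈ Finset.range N, ((n : ℝ) + (1 + ν) / 2) * Real.log (n + (1 + ν) / 2)
      + Q (N + (1 + ν) / 2)) atTop
      (nhds ((deriv (hurwitzZetaR ((1 + ν) / 2 + 1)) (-1)).re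
        - (1 + ν) / 2 * Real.log ((1 + ν) / 2))) := by
  rw [← tendsto_add_atTop_iff_nat 1]
  have h := (real_of_tendsto (hzR_deriv (u := (1 + ν) / 2 + 1) (by positivity))).1
  refine (h.sub_const _).congr ?_
  intro N
  rw [Finset.sum_range_succ']
  have e : ∀ n : ℕ, ((n + 1 : ℕ) : ℝ) + (1 + ν) / 2 = n + ((1 + ν) / 2 + 1) :=
    fun n => by push_cast; ring
  simp only [e]
  simp
  ring

lemma Z_tendsto :
    Tendsto (fun N : ℕ => -∑ n ∈ Finset.range N, ((n : ℝ) + (0 : ℝ)) * Real.log (n + (0 : ℝ))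
      + Q (N + (0 : ℝ))) atTop (nhds (deriv riemannZeta (-1)).re) ∧
      ((deriv riemannZeta (-1)).re : ℂ) = deriv riemannZeta (-1) := by
  have h := hz_deriv (f := 0) (by simp)
  have e : HurwitzZeta.hurwitzZeta (((0 : ℝ)) : UnitAddCircle) = riemannZeta := by
    rw [← HurwitzZeta.hurwitzZeta_zero]; simp
  rw [e] at h
  exact real_of_tendsto h

lemma ND_tendsto {a : ℝ} (ha : 1 ≤ a) :
    Tendsto (fun N : ℕ => (N : ℝ) * D (a + N)) atTop (nhds 0) := by
  have : Tendsto (fun N : ℕ => (2 : ℝ) / N) atTop (nhds 0) := tendsto_const_div_atTop_nhds_zero_nat 2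
  refine squeeze_zero_norm' ?_ this
  filter_upwards [eventually_gt_atTop 0] with n hn
  have hn : (0 : ℝ) < n := by exact_mod_cast hn
  rw [norm_mul, Real.norm_of_nonneg hn.le, Real.norm_eq_abs]
  have h := abs_D_le (x := a + n) (by linarith)
  have h2 : 2 / (a + (n : ℝ)) ^ 2 ≤ 2 / n ^ 2 := by gcongr; linarith
  calc (n : ℝ) * |D (a + n)| ≤ n * (2 / n ^ 2) := by gcongr; linarith
    _ = 2 / n := by field_simp

lemma T_tsum {ν : ℝ} (hν : 0 ≤ ν) : ∑' n, T ν n =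
    -∑' n, Bt ν n + ν ^ 2 / 2 * Real.eulerMascheroniConstant + (deriv riemannZeta (-1)).re
    + ((deriv (hurwitzZetaR ((1 + ν) / 2 + 1)) (-1)).re - (1 + ν) / 2 * Real.log ((1 + ν) / 2))
    + ν / 2 * Real.log (Real.Gamma ((1 + ν) / 2))
    + (1 / 24 + ν / 2 + 3 * ν ^ 2 / 8 - ν / 4 * Real.log (2 * Real.pi)) := by
  refine tendsto_nhds_unique (T_summable hν).hasSum.tendsto_sum_nat ?_
  have h1 := ND_tendsto (a := 1 + ν) (by linarith)
  have h2 := (D_tendsto (x := (1 + ν) / 2) (by positivity)).const_mul (ν / 2)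
  have h3 := (Bt_summable hν).hasSum.tendsto_sum_nat
  have h4 := Real.tendsto_harmonic_sub_log.const_mul (ν ^ 2 / 2)
  have h5 := Z_tendsto.1
  have h6 := M_tendsto hν
  have h7 := E_tendsto hν
  have := ((((((h3.neg.add h4).add h5).add h6).add_const
    (ν / 2 * Real.log (Real.Gamma ((1 + ν) / 2)))).add h7).add h1).sub h2
  rw [add_zero, mul_zero, sub_zero] at this
  refine this.congr ?_
  intro N
  rw [sum_T hν, sum_logGamma hν, sum_B hν]
  have e1 : 1 + ν + (N : ℝ) = N + (1 + ν) := by ring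
  have e2 : (1 + ν) / 2 + (N : ℝ) = N + (1 + ν) / 2 := by ring
  unfold D E
  rw [e1, e2]
  simp only [add_zero]
  ring

end X2


/-- evaluation of the series `X_{2,r}^{(c)}`. -/
theorem X2rc_series_evaluation (ν : ℝ) (hν : 0 ≤ ν) :
    Summable (fun n : ℕ =>
      Real.log (Real.Gamma (1 + ν + n)) +
        ((n : ℝ) + (1 + ν) / 2) * (1 - Real.log ((n : ℝ) + (1 + ν) / 2)) +
        (1 - 3 * ν ^ 2) / 24 * Real.log (1 + 1 / ((n : ℝ) + 1)) -
        ν / 2 * Real.log ((n : ℝ) + (1 + ν) / 2) - Real.log (2 * Real.pi) / 2) ∧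
    ((∑' n : ℕ,
        (Real.log (Real.Gamma (1 + ν + n)) +
          ((n : ℝ) + (1 + ν) / 2) * (1 - Real.log ((n : ℝ) + (1 + ν) / 2)) +
          (1 - 3 * ν ^ 2) / 24 * Real.log (1 + 1 / ((n : ℝ) + 1)) -
          ν / 2 * Real.log ((n : ℝ) + (1 + ν) / 2) - Real.log (2 * Real.pi) / 2) : ℝ) : ℂ) =
      ((ν / 2 * Real.log (Real.Gamma ((1 + ν) / 2)) : ℝ) : ℂ) -
        ((logBarnesG1p ν : ℝ) : ℂ) + deriv riemannZeta (-1) +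
        ((ν / 4 * Real.log (2 * Real.pi) : ℝ) : ℂ) - (((3 * ν ^ 2 - 1) / 24 : ℝ) : ℂ) +
        deriv (hurwitzZetaR ((1 + ν) / 2 + 1)) (-1) -
        (((1 + ν) / 2 * Real.log ((1 + ν) / 2) : ℝ) : ℂ) := by
  refine ⟨X2.T_summable hν, ?_⟩
  have h := X2.T_tsum hν
  have hz := X2.Z_tendsto.2
  have hh := (X2.real_of_tendsto (X2.hzR_deriv (u := (1 + ν) / 2 + 1) (by positivity))).2
  rw [← hz, ← hh]
  have e : logBarnesG1p ν = ν / 2 * Real.log (2 * Real.pi) -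
      (ν + ν ^ 2 * (1 + Real.eulerMascheroniConstant)) / 2 + ∑' n, X2.Bt ν n := rfl
  rw [e]
  change ((∑' n, X2.T ν n : ℝ) : ℂ) = _
  rw [h]
  push_cast
  ring
end
end
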